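/- Let (G,C) be a strongly connected inhomogeneous Mauldin–Williams graph in ℝ^d satisfying the SOSC with ∫₀^∞ e^{−s₀t} N_{e^{−t}}(C_i) dt < ∞ for all i ∈ V, where s₀ = s₀(G). With f_j^*(t) = e^{−s₀t}N_{e^{−t}}(K_j^C) and L_i^*(t) = Σ_{e∈E_i} N_{e^{−t}}(S_e(K_{t(e)}^C)) − N_{e^{−t}}(K_i^C), define f_i(t) = f_i^*(t) for t ≥ 0 and f_i(t) = 0 for t < 0, and L_i(t) = −L_i^*(t)e^{−s₀t} + Σ_{j∈V} Σ_{e∈E_{ij}, t < log(1/r_e)} r_e^{s₀} f_j^*(t + log r_e) for t ≥ 0 and L_i(t) = 0 for t < 0. Then: (a) f_i(t) = Σ_{j∈V} Σ_{e∈E_{ij}} r_e^{s₀} f_j(t + log r_e) + L_i(t) for all i ∈ V and t ∈ ℝ; and (b) each L_i is directly Riemann integrable, i.e., Riemann integrable on finite closed intervals with Σ_{k=0}^∞ sup_{t∈[k,k+1]} |L_i(t)| < ∞. -/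

import Mathlib

open Set Filter Topology MeasureTheory Metric

noncomputable section

/-- Points of `ℝ^d`. -/
abbrev Pt (d : ℕ) := EuclideanSpace ℝ (Fin d)

/-- The `r`-covering number of `A ⊆ ℝ^d`: the least number of closed balls of
radius `r` needed to cover `A`. -/
noncomputable def coveringNumber {d : ℕ} (A : Set (Pt d)) (r : ℝ) : ℕ :=
  sInf {k : ℕ | ∃ c : Fin k → Pt d, A ⊆ ⋃ i, Metric.closedBall (c i) r}

/-- A Mauldin–Williams graph in `ℝ^d` over a finite directed multigraph with
vertex type `V` and edge type `E`: each vertex `i` carries a non-empty compact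
set `X i` equal to the closure of its interior, and each edge `e` carries a
contractive similarity `S e` of ratio `r e ∈ (0,1)` mapping `X (term e)` into
`X (init e)`. -/
structure MWGraph (d : ℕ) (V E : Type) [Fintype V] [Fintype E] where
  init : E → V
  term : E → V
  X : V → Set (Pt d)
  S : E → Pt d → Pt d
  r : E → ℝ
  X_nonempty : ∀ i, (X i).Nonempty
  X_compact : ∀ i, IsCompact (X i)
  X_regular : ∀ i, closure (interior (X i)) = X i
  r_pos : ∀ e, 0 < r e
  r_lt_one : ∀ e, r e < 1
  S_maps : ∀ e, Set.MapsTo (S e) (X (term e)) (X (init e))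
  S_sim : ∀ e x y, dist (S e x) (S e y) = r e * dist x y

namespace MWGraph

variable {d : ℕ} {V E : Type} [Fintype V] [Fintype E]

variable (G : MWGraph d V E)

/-- `G.IsPathFrom j γ` holds iff the list of edges `γ` is a directed path
starting at vertex `j`. -/
def IsPathFrom : V → List E → Prop
  | _, [] => True
  | j, e :: es => G.init e = j ∧ IsPathFrom (G.term e) es

/-- Terminal vertex of the path `γ` starting at `j`. -/
def pathTerm : V → List E → V
  | j, [] => j
  | _, e :: es => pathTerm (G.term e) es

/-- `S_γ = S_{e₁} ∘ ⋯ ∘ S_{eₙ}` (with `S_∅ = id`). -/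
def pathMap : List E → Pt d → Pt d
  | [] => id
  | e :: es => G.S e ∘ pathMap es

/-- `r_γ = r_{e₁} ⋯ r_{eₙ}` (with `r_∅ = 1`). -/
def pathRatio (γ : List E) : ℝ := (γ.map G.r).prod

/-- The underlying multigraph is strongly connected: for every ordered pair of
vertices there is a (non-empty) directed path from the first to the second. -/
def StronglyConnected : Prop :=
  ∀ i j : V, ∃ γ : List E, γ ≠ [] ∧ G.IsPathFrom i γ ∧ G.pathTerm i γ = j

/-- `K` is the list of graph-directed self-similar sets of `G`: the unique list
of non-empty compact sets with `K i = ⋃_{e ∈ E_i} S_e (K (term e))`. -/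
def IsAttractor (K : V → Set (Pt d)) : Prop :=
  (∀ i, IsCompact (K i)) ∧ (∀ i, (K i).Nonempty) ∧
    ∀ i, K i = ⋃ e ∈ {e : E | G.init e = i}, G.S e '' K (G.term e)

/-- `C` is an admissible list of condensation sets: compact subsets of the `X i`. -/
def IsCondensation (C : V → Set (Pt d)) : Prop :=
  ∀ i, IsCompact (C i) ∧ C i ⊆ G.X i

/-- `K` is the list of inhomogeneous graph-directed self-similar sets of `(G, C)`:
the unique list of non-empty compact sets with
`K i = ⋃_{e ∈ E_i} S_e (K (term e)) ∪ C i`. -/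
def IsInhomAttractor (C : V → Set (Pt d)) (K : V → Set (Pt d)) : Prop :=
  (∀ i, IsCompact (K i)) ∧ (∀ i, (K i).Nonempty) ∧
    ∀ i, K i = (⋃ e ∈ {e : E | G.init e = i}, G.S e '' K (G.term e)) ∪ C i

/-- `G` satisfies the open set condition with the open sets `U`. -/
def IsOSCWith (U : V → Set (Pt d)) : Prop :=
  (∀ i, (U i).Nonempty) ∧ (∀ i, IsOpen (U i)) ∧ (∀ i, Bornology.IsBounded (U i)) ∧
    (∀ i, U i ⊆ G.X i) ∧
    (∀ i, (⋃ e ∈ {e : E | G.init e = i}, G.S e '' U (G.term e)) ⊆ U i) ∧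
    ∀ e e' : E, G.init e = G.init e' → e ≠ e' →
      Disjoint (G.S e '' U (G.term e)) (G.S e' '' U (G.term e'))

/-- The set `{-log r_γ : γ a directed cycle of G}`. -/
def cycleSet : Set ℝ :=
  {x : ℝ | ∃ (j : V) (γ : List E), γ ≠ [] ∧ G.IsPathFrom j γ ∧ G.pathTerm j γ = j ∧
    x = -Real.log (G.pathRatio γ)}

/-- `G_M`, the smallest closed additive subgroup of `ℝ` containing
`{-log r_γ : γ a directed cycle}`. -/
def GM : Set ℝ := closure ((AddSubgroup.closure (G.cycleSet) : AddSubgroup ℝ) : Set ℝ)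

variable [DecidableEq V]

/-- The matrix `A_G^s` with entries `(A_G^s)_{ij} = Σ_{e ∈ E_{ij}} r_e^s`. -/
def Amatrix (s : ℝ) : Matrix V V ℝ :=
  Matrix.of fun i j => ∑ e : E, if G.init e = i ∧ G.term e = j then G.r e ^ s else 0

end MWGraph

/-- Spectral radius of a real square matrix: the largest modulus of a complex
eigenvalue. -/
noncomputable def matrixSpectralRadius {n : Type} [Fintype n] [DecidableEq n]
    (A : Matrix n n ℝ) : ℝ :=
  sSup {x : ℝ | ∃ μ : ℂ, μ ∈ spectrum ℂ (A.map (fun a : ℝ => (a : ℂ))) ∧ x = ‖μ‖}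

/-- `s` is the (unique) exponent `s ≥ 0` with `ρ(A_G^s) = 1`, i.e. `s = s₀(G)`. -/
def IsS0 {d : ℕ} {V E : Type} [Fintype V] [Fintype E] [DecidableEq V]
    (G : MWGraph d V E) (s : ℝ) : Prop :=
  0 ≤ s ∧ matrixSpectralRadius (G.Amatrix s) = 1

/-!
Up to the condensation set, `K_i^C` is the union of its first-level pieces, so `L_i` measures how
far the covering numbers are from being additive. By the open set condition, a ball of radius
`e^{-t}` that meets two pieces can meet a piece `S_e(K_{t(e)}^C)` only within `2e^{-t}` of the
complement of `S_e(U_{t(e)})`. Hence `|L_i(t)|` is at most a constant times the rescaled covering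
numbers of the sets `C_i` and of the boundary layers, of width proportional to `e^{-t}`, of the sets
`K_{t(e)}^C` in `U_{t(e)}`.

The layers satisfy the same renewal inequality as the attractors, with the condensation sets as
source. By the strong open set condition some cell of `K_i^C` keeps a positive distance from the
complement of `U_i`, hence drops out of the layer at small scales. Measured against a positive
subinvariant vector of `A_G^s`, this loss keeps the sums of the layer covering numbers along
`t, t - 1, t - 2, …` bounded, which gives summability.
-/

section Covering

variable {d : ℕ} {A B : Set (Pt d)} {r r' : ℝ}

lemma coveringNumber_le_card (s : Finset (Pt d)) (hs : A ⊆ ⋃ c ∈ s, closedBall c r) :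
    coveringNumber A r ≤ s.card := by
  refine Nat.sInf_le ⟨fun i => (s.equivFin.symm i : Pt d), fun x hx => ?_⟩
  obtain ⟨c, hc, hxc⟩ := mem_iUnion₂.1 (hs hx)
  exact mem_iUnion.2 ⟨s.equivFin ⟨c, hc⟩, by simpa using hxc⟩

lemma exists_finset_cover_card_le (hA : Bornology.IsBounded A) (hr : 0 < r) :
    ∃ s : Finset (Pt d), s.card ≤ coveringNumber A r ∧ A ⊆ ⋃ c ∈ s, closedBall c r := by
  classical
  have htb : TotallyBounded A := hA.isCompact_closure.totallyBounded.subset subset_closure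
  obtain ⟨t, -, htf, ht⟩ := Metric.finite_approx_of_totallyBounded htb r hr
  have hne : {k : ℕ | ∃ c : Fin k → Pt d, A ⊆ ⋃ i, closedBall (c i) r}.Nonempty := by
    refine ⟨_, fun i => (htf.toFinset.equivFin.symm i : Pt d), fun x hx => ?_⟩
    obtain ⟨c, hc, hxc⟩ := mem_iUnion₂.1 (ht hx)
    exact mem_iUnion.2 ⟨htf.toFinset.equivFin ⟨c, htf.mem_toFinset.2 hc⟩,
      by simpa using (mem_ball.1 hxc).le⟩
  obtain ⟨c, hc⟩ := Nat.sInf_mem hne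
  refine ⟨Finset.univ.image c, Finset.card_image_le.trans (by simp [_root_.coveringNumber]),
    fun x hx => ?_⟩
  obtain ⟨i, hi⟩ := mem_iUnion.1 (hc hx)
  exact mem_iUnion₂.2 ⟨c i, by simp, hi⟩

lemma coveringNumber_empty (r : ℝ) : coveringNumber (∅ : Set (Pt d)) r = 0 :=
  Nat.le_zero.1 (coveringNumber_le_card ∅ (empty_subset _))

lemma coveringNumber_mono (hB : Bornology.IsBounded B) (hAB : A ⊆ B) (hr : 0 < r)
    (hrr' : r ≤ r') : coveringNumber A r' ≤ coveringNumber B r := by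
  obtain ⟨s, hs, hc⟩ := exists_finset_cover_card_le hB hr
  exact (coveringNumber_le_card s ((hAB.trans hc).trans
    (iUnion₂_mono fun c _ => closedBall_subset_closedBall hrr'))).trans hs

lemma coveringNumber_union_le (hA : Bornology.IsBounded A) (hB : Bornology.IsBounded B)
    (hr : 0 < r) : coveringNumber (A ∪ B) r ≤ coveringNumber A r + coveringNumber B r := by
  classical
  obtain ⟨s, hs, hsc⟩ := exists_finset_cover_card_le hA hr
  obtain ⟨t, ht, htc⟩ := exists_finset_cover_card_le hB hr
  refine (coveringNumber_le_card (s ∪ t) ?_).trans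
    ((Finset.card_union_le s t).trans (add_le_add hs ht))
  rw [Finset.set_biUnion_union]
  exact union_subset_union hsc htc

lemma coveringNumber_biUnion_le {ι : Type*} (F : Finset ι) (A : ι → Set (Pt d))
    (hA : ∀ e ∈ F, Bornology.IsBounded (A e)) (hr : 0 < r) :
    coveringNumber (⋃ e ∈ F, A e) r ≤ ∑ e ∈ F, coveringNumber (A e) r := by
  classical
  induction F using Finset.induction_on with
  | empty => simp only [Finset.notMem_empty, iUnion_of_empty, iUnion_empty, coveringNumber_empty,
      Finset.sum_empty, le_refl]
  | insert a F ha ih =>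
    have hF : ∀ e ∈ F, Bornology.IsBounded (A e) := fun e he => hA e (Finset.mem_insert_of_mem he)
    rw [Finset.sum_insert ha, Finset.set_biUnion_insert]
    exact (coveringNumber_union_le (hA a (Finset.mem_insert_self a F))
      ((Bornology.isBounded_biUnion_finset F).2 hF) hr).trans (Nat.add_le_add_left (ih hF) _)

-- Otherwise replacing the balls of `bad` by an optimal cover of `D` would give a cover of `A` with
-- fewer than `coveringNumber A r` balls.
lemma card_le_coveringNumber_of_inter_closedBall_subset {D : Set (Pt d)} {s bad : Finset (Pt d)}
    (hs : s.card ≤ coveringNumber A r) (hA : A ⊆ ⋃ c ∈ s, closedBall c r)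
    (hD : Bornology.IsBounded D) (hr : 0 < r) (hbad : bad ⊆ s)
    (hbadD : ∀ c ∈ bad, A ∩ closedBall c r ⊆ D) :
    bad.card ≤ coveringNumber D r := by
  classical
  obtain ⟨t, ht, htc⟩ := exists_finset_cover_card_le hD hr
  have hcover : A ⊆ ⋃ c ∈ (s \ bad) ∪ t, closedBall c r := by
    intro x hx
    obtain ⟨c, hc, hxc⟩ := mem_iUnion₂.1 (hA hx)
    rw [Finset.set_biUnion_union]
    by_cases hcb : c ∈ bad
    · exact Or.inr (htc (hbadD c hcb ⟨hx, hxc⟩))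
    · exact Or.inl (mem_iUnion₂.2 ⟨c, Finset.mem_sdiff.2 ⟨hc, hcb⟩, hxc⟩)
  have hunion := (coveringNumber_le_card _ hcover).trans (Finset.card_union_le (s \ bad) t)
  have hsdiff := Finset.card_sdiff_add_card_eq_card hbad
  omega

lemma sum_coveringNumber_le {ι : Type*} (F : Finset ι) (A : ι → Set (Pt d)) {K D : Set (Pt d)}
    (hK : Bornology.IsBounded K) (hD : Bornology.IsBounded D) (hr : 0 < r)
    (hAK : ∀ e ∈ F, A e ⊆ K)
    (hAD : ∀ c, ∀ e ∈ F, ∀ e' ∈ F, e ≠ e' → (A e ∩ closedBall c r).Nonempty →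
      (A e' ∩ closedBall c r).Nonempty → K ∩ closedBall c r ⊆ D) :
    ∑ e ∈ F, coveringNumber (A e) r ≤ coveringNumber K r + F.card * coveringNumber D r := by
  classical
  obtain ⟨s, hs, hsc⟩ := exists_finset_cover_card_le hK hr
  let hit : Pt d → Finset ι := fun c => F.filter fun e => (A e ∩ closedBall c r).Nonempty
  let bad : Finset (Pt d) := s.filter fun c => 1 < (hit c).card
  have hbad : bad.card ≤ coveringNumber D r := by
    refine card_le_coveringNumber_of_inter_closedBall_subset hs hsc hD hr
      (Finset.filter_subset _ s) fun c hc => ?_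
    obtain ⟨e, he, e', he', hne⟩ := Finset.one_lt_card.1 (Finset.mem_filter.1 hc).2
    obtain ⟨heF, hec⟩ := Finset.mem_filter.1 he
    obtain ⟨heF', hec'⟩ := Finset.mem_filter.1 he'
    exact hAD c e heF e' heF' hne hec hec'
  have hcov : ∀ e ∈ F, coveringNumber (A e) r ≤
      (s.filter fun c => (A e ∩ closedBall c r).Nonempty).card := by
    intro e he
    refine coveringNumber_le_card _ fun x hx => ?_
    obtain ⟨c, hc, hxc⟩ := mem_iUnion₂.1 (hsc (hAK e he hx))
    exact mem_iUnion₂.2 ⟨c, Finset.mem_filter.2 ⟨hc, x, hx, hxc⟩, hxc⟩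
  calc ∑ e ∈ F, coveringNumber (A e) r
      ≤ ∑ c ∈ s, (hit c).card := by
        refine (Finset.sum_le_sum hcov).trans_eq ?_
        exact Finset.sum_card_bipartiteAbove_eq_sum_card_bipartiteBelow _
    _ ≤ ∑ c ∈ s, (1 + if 1 < (hit c).card then F.card else 0) := by
        refine Finset.sum_le_sum fun c _ => ?_
        have : (hit c).card ≤ F.card := Finset.card_filter_le _ _
        split_ifs <;> omega
    _ = s.card + F.card * bad.card := by
        rw [Finset.sum_add_distrib, ← Finset.sum_filter, ← Finset.card_eq_sum_ones,
          Finset.sum_const, smul_eq_mul, mul_comm]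
    _ ≤ coveringNumber K r + F.card * coveringNumber D r :=
        add_le_add hs (Nat.mul_le_mul_left _ hbad)

end Covering

section Similarity

lemma surjective_of_dist_eq_mul_dist {F : Type*} [NormedAddCommGroup F] [NormedSpace ℝ F]
    [FiniteDimensional ℝ F] [StrictConvexSpace ℝ F] {S : F → F} {ρ : ℝ} (hρ : 0 < ρ)
    (hS : ∀ x y, dist (S x) (S y) = ρ * dist x y) : Function.Surjective S := by
  have hi : Isometry fun x => ρ⁻¹ • S x := Isometry.of_dist_eq fun x y => by
    rw [dist_smul₀, hS, Real.norm_of_nonneg (inv_nonneg.2 hρ.le), inv_mul_cancel_left₀ hρ.ne']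
  have : Inhabited F := ⟨0⟩
  intro y
  obtain ⟨x, hx⟩ :=
    (hi.affineIsometryOfStrictConvexSpace.toAffineIsometryEquiv rfl).surjective (ρ⁻¹ • y)
  exact ⟨x, smul_right_injective _ (inv_ne_zero hρ.ne') hx⟩

lemma isHomeomorph_of_dist_eq_mul_dist {F : Type*} [NormedAddCommGroup F] [NormedSpace ℝ F]
    [FiniteDimensional ℝ F] [StrictConvexSpace ℝ F] {S : F → F} {ρ : ℝ} (hρ : 0 < ρ)
    (hS : ∀ x y, dist (S x) (S y) = ρ * dist x y) : IsHomeomorph S :=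
  isHomeomorph_iff_isEmbedding_surjective.2
    ⟨Dilation.isEmbedding (Dilation.mkOfDistEq S ⟨⟨ρ, hρ.le⟩, NNReal.coe_ne_zero.1 hρ.ne', hS⟩),
      surjective_of_dist_eq_mul_dist hρ hS⟩

lemma isBounded_image_of_dist_eq_mul_dist {X Y : Type*} [PseudoMetricSpace X]
    [PseudoMetricSpace Y] {S : X → Y} {ρ : ℝ} (hρ : 0 ≤ ρ)
    (hS : ∀ x y, dist (S x) (S y) = ρ * dist x y) {A : Set X} (hA : Bornology.IsBounded A) :
    Bornology.IsBounded (S '' A) :=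
  (LipschitzWith.of_dist_le_mul (K := ⟨ρ, hρ⟩) fun x y => (hS x y).le).isBounded_image hA

variable {d : ℕ} {S : Pt d → Pt d} {ρ : ℝ}

lemma coveringNumber_image_of_dist_eq_mul_dist (hρ : 0 < ρ)
    (hS : ∀ x y, dist (S x) (S y) = ρ * dist x y) (A : Set (Pt d)) (r : ℝ) :
    coveringNumber (S '' A) (ρ * r) = coveringNumber A r := by
  have hball : ∀ x c, S x ∈ closedBall (S c) (ρ * r) ↔ x ∈ closedBall c r := fun x c => by
    rw [mem_closedBall, mem_closedBall, hS, mul_le_mul_iff_of_pos_left hρ]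
  have hcover : ∀ {k : ℕ} (b : Fin k → Pt d),
      S '' A ⊆ ⋃ i, closedBall (S (b i)) (ρ * r) ↔ A ⊆ ⋃ i, closedBall (b i) r := fun b => by
    simp only [subset_def, forall_mem_image, mem_iUnion, hball]
  unfold _root_.coveringNumber
  congr 1
  ext k
  constructor
  · rintro ⟨c, hc⟩
    choose b hb using fun i => surjective_of_dist_eq_mul_dist hρ hS (c i)
    exact ⟨b, (hcover b).1 (by simpa only [hb] using hc)⟩
  · rintro ⟨c, hc⟩
    exact ⟨fun i => S (c i), (hcover c).2 hc⟩

end Similarity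

section ScaledCoveringNumber

/-- The rescaled covering number `e^{-st} N_{e^{-t}}(A)`; for `A = K_j^C` and `s = s₀` this is the
function `f_j^*`. -/
def scaledCoveringNumber {d : ℕ} (s : ℝ) (A : Set (Pt d)) (t : ℝ) : ℝ :=
  Real.exp (-s * t) * (coveringNumber A (Real.exp (-t)) : ℝ)

variable {d : ℕ} {s t : ℝ} {A B : Set (Pt d)}

lemma scaledCoveringNumber_nonneg : 0 ≤ scaledCoveringNumber s A t :=
  mul_nonneg (Real.exp_nonneg _) (Nat.cast_nonneg _)

lemma scaledCoveringNumber_mono (hB : Bornology.IsBounded B) (hAB : A ⊆ B) :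
    scaledCoveringNumber s A t ≤ scaledCoveringNumber s B t :=
  mul_le_mul_of_nonneg_left
    (Nat.cast_le.2 (coveringNumber_mono hB hAB (Real.exp_pos _) le_rfl)) (Real.exp_nonneg _)

lemma scaledCoveringNumber_union_le (hA : Bornology.IsBounded A) (hB : Bornology.IsBounded B) :
    scaledCoveringNumber s (A ∪ B) t ≤ scaledCoveringNumber s A t + scaledCoveringNumber s B t := by
  simp only [scaledCoveringNumber, ← mul_add]
  gcongr
  exact_mod_cast coveringNumber_union_le hA hB (Real.exp_pos _)

lemma scaledCoveringNumber_biUnion_le {ι : Type*} (F : Finset ι) (A : ι → Set (Pt d))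
    (hA : ∀ e ∈ F, Bornology.IsBounded (A e)) :
    scaledCoveringNumber s (⋃ e ∈ F, A e) t ≤ ∑ e ∈ F, scaledCoveringNumber s (A e) t := by
  simp only [scaledCoveringNumber, ← Finset.mul_sum]
  gcongr
  exact_mod_cast coveringNumber_biUnion_le F A hA (Real.exp_pos _)

lemma sum_scaledCoveringNumber_le {ι : Type*} (F : Finset ι) (A : ι → Set (Pt d))
    {K D : Set (Pt d)} (hK : Bornology.IsBounded K) (hD : Bornology.IsBounded D)
    (hAK : ∀ e ∈ F, A e ⊆ K)
    (hAD : ∀ c, ∀ e ∈ F, ∀ e' ∈ F, e ≠ e' → (A e ∩ closedBall c (Real.exp (-t))).Nonempty →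
      (A e' ∩ closedBall c (Real.exp (-t))).Nonempty → K ∩ closedBall c (Real.exp (-t)) ⊆ D) :
    ∑ e ∈ F, scaledCoveringNumber s (A e) t ≤
      scaledCoveringNumber s K t + F.card * scaledCoveringNumber s D t := by
  simp only [scaledCoveringNumber, mul_left_comm (F.card : ℝ), ← Finset.mul_sum, ← mul_add]
  gcongr
  exact_mod_cast sum_coveringNumber_le F A hK hD (Real.exp_pos _) hAK hAD

lemma scaledCoveringNumber_image_of_dist_eq_mul_dist {S : Pt d → Pt d} {ρ : ℝ} (hρ : 0 < ρ)
    (hS : ∀ x y, dist (S x) (S y) = ρ * dist x y) :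
    scaledCoveringNumber s (S '' A) t = ρ ^ s * scaledCoveringNumber s A (t + Real.log ρ) := by
  have hradius : Real.exp (-t) = ρ * Real.exp (-(t + Real.log ρ)) := by
    rw [neg_add, Real.exp_add, Real.exp_neg (Real.log ρ), Real.exp_log hρ, mul_left_comm,
      mul_inv_cancel₀ hρ.ne', mul_one]
  have hfactor : Real.exp (-s * t) = ρ ^ s * Real.exp (-s * (t + Real.log ρ)) := by
    rw [Real.rpow_def_of_pos hρ, ← Real.exp_add]
    ring_nf
  rw [scaledCoveringNumber, scaledCoveringNumber, hfactor, hradius,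
    coveringNumber_image_of_dist_eq_mul_dist hρ hS, mul_assoc]

lemma scaledCoveringNumber_le_exp_mul (hs : 0 ≤ s) (hA : Bornology.IsBounded A) {u v : ℝ}
    (huv : u ≤ v) (hvu : v ≤ u + 1) :
    scaledCoveringNumber s A u ≤ Real.exp s * scaledCoveringNumber s A v := by
  have hexp : Real.exp (-s * u) ≤ Real.exp s * Real.exp (-s * v) := by
    rw [← Real.exp_add]
    exact Real.exp_le_exp.2 (by nlinarith)
  have hN : coveringNumber A (Real.exp (-u)) ≤ coveringNumber A (Real.exp (-v)) :=
    coveringNumber_mono hA subset_rfl (Real.exp_pos _) (Real.exp_le_exp.2 (neg_le_neg huv))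
  calc scaledCoveringNumber s A u
      ≤ Real.exp s * Real.exp (-s * v) * (coveringNumber A (Real.exp (-v)) : ℝ) :=
        mul_le_mul hexp (Nat.cast_le.2 hN) (Nat.cast_nonneg _) (by positivity)
    _ = Real.exp s * scaledCoveringNumber s A v := mul_assoc _ _ _

lemma scaledCoveringNumber_le_coveringNumber (hs : 0 ≤ s) (hA : Bornology.IsBounded A) {T : ℝ}
    (ht : 0 ≤ t) (htT : t ≤ T) :
    scaledCoveringNumber s A t ≤ (coveringNumber A (Real.exp (-T)) : ℝ) := by
  have hexp : Real.exp (-s * t) ≤ 1 := Real.exp_le_one_iff.2 (by nlinarith)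
  have hN : coveringNumber A (Real.exp (-t)) ≤ coveringNumber A (Real.exp (-T)) :=
    coveringNumber_mono hA subset_rfl (Real.exp_pos _) (Real.exp_le_exp.2 (neg_le_neg htT))
  exact (mul_le_of_le_one_left (Nat.cast_nonneg _) hexp).trans (Nat.cast_le.2 hN)

lemma monotone_coveringNumber_exp_neg (hA : Bornology.IsBounded A) :
    Monotone fun t : ℝ => (coveringNumber A (Real.exp (-t)) : ℝ) := fun _ _ huv =>
  Nat.cast_le.2 (coveringNumber_mono hA subset_rfl (Real.exp_pos _)
    (Real.exp_le_exp.2 (neg_le_neg huv)))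

lemma integrableOn_scaledCoveringNumber (hA : Bornology.IsBounded A) {I : Set ℝ}
    (hfin : ∫⁻ t in I, ENNReal.ofReal (scaledCoveringNumber s A t) < ⊤) :
    IntegrableOn (scaledCoveringNumber s A) I := by
  have hmeas : Measurable (scaledCoveringNumber s A) :=
    (by fun_prop : Measurable fun t : ℝ => Real.exp (-s * t)).mul
      (monotone_coveringNumber_exp_neg hA).measurable
  exact (lintegral_ofReal_ne_top_iff_integrable hmeas.aestronglyMeasurable
    (Eventually.of_forall fun _ => scaledCoveringNumber_nonneg)).1 hfin.ne

lemma intervalIntegrable_indicator_scaledCoveringNumber (hA : Bornology.IsBounded A) (a b : ℝ) :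
    IntervalIntegrable ((Ici 0).indicator (scaledCoveringNumber s A)) volume a b := by
  have hmono : Monotone ((Ici 0).indicator fun t : ℝ => (coveringNumber A (Real.exp (-t)) : ℝ)) :=
    fun u v huv => by
      by_cases hu : 0 ≤ u
      · rw [indicator_of_mem (mem_Ici.2 hu), indicator_of_mem (mem_Ici.2 (hu.trans huv))]
        exact monotone_coveringNumber_exp_neg hA huv
      · rw [indicator_of_notMem (by simpa using hu)]
        exact indicator_nonneg (fun _ _ => Nat.cast_nonneg _) v
  have heq : (Ici 0).indicator (scaledCoveringNumber s A) = fun t => Real.exp (-s * t) *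
      (Ici 0).indicator (fun t : ℝ => (coveringNumber A (Real.exp (-t)) : ℝ)) t :=
    funext fun _ => indicator_mul_right _ (fun t => Real.exp (-s * t)) _
  rw [heq]
  exact hmono.intervalIntegrable.continuousOn_mul (by fun_prop)

end ScaledCoveringNumber

section BackwardSum

/-- The sum `F t + F (t - 1) + ⋯ + F (t - (N - 1))`. Bounds uniform in `t` and `N` say that `F` is
summable along every unit lattice, uniformly in its position. -/
def backwardSum (F : ℝ → ℝ) (N : ℕ) (t : ℝ) : ℝ :=
  ∑ n ∈ Finset.range N, F (t - n)

lemma backwardSum_mono {F G : ℝ → ℝ} (hFG : F ≤ G) (N : ℕ) (t : ℝ) :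
    backwardSum F N t ≤ backwardSum G N t :=
  Finset.sum_le_sum fun _ _ => hFG _

lemma backwardSum_indicator_le_integral {F G : ℝ → ℝ} (hG : 0 ≤ G)
    (hGi : IntegrableOn G (Ioi 0))
    (hFG : ∀ u v, 0 ≤ u → u ≤ v → v ≤ u + 1 → F u ≤ G v) (N : ℕ) (t : ℝ) :
    backwardSum ((Ici 0).indicator F) N t ≤ ∫ v in Ioi 0, G v := by
  set H := (Ioi 0).indicator G with hH
  have hHi : Integrable H := hGi.integrable_indicator measurableSet_Ioi
  have hH0 : 0 ≤ H := indicator_nonneg fun v _ => hG v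
  have hunit : ∀ u, (Ici 0).indicator F u ≤ ∫ v in u..(u + 1), H v := fun u => by
    by_cases hu : 0 ≤ u
    · calc (Ici 0).indicator F u = ∫ _ in u..(u + 1), F u := by simp [hu]
        _ ≤ ∫ v in u..(u + 1), H v := by
          refine intervalIntegral.integral_mono_on_of_le_Ioo (by linarith) (by simp)
            hHi.intervalIntegrable fun v hv => ?_
          rw [hH, indicator_of_mem (mem_Ioi.2 (hu.trans_lt hv.1))]
          exact hFG u v hu hv.1.le hv.2.le
    · rw [indicator_of_notMem (by simpa using hu)]
      exact intervalIntegral.integral_nonneg (by linarith) fun v _ => hH0 v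
  have hadj := intervalIntegral.sum_integral_adjacent_intervals (f := H) (μ := volume)
    (a := fun n : ℕ => t + 1 - n) (n := N) fun n _ => hHi.intervalIntegrable
  calc backwardSum ((Ici 0).indicator F) N t
      ≤ ∑ n ∈ Finset.range N, -∫ v in (t + 1 - (n : ℕ))..(t + 1 - (n + 1 : ℕ)), H v := by
        refine Finset.sum_le_sum fun n _ => (hunit _).trans_eq ?_
        rw [← intervalIntegral.integral_symm]
        congr 1 <;> push_cast <;> ring
    _ = ∫ v in (t + 1 - N)..(t + 1), H v := by
        rw [Finset.sum_neg_distrib, hadj, ← intervalIntegral.integral_symm, Nat.cast_zero, sub_zero]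
    _ ≤ ∫ v, H v := by
        rw [intervalIntegral.integral_of_le (by linarith [N.cast_nonneg (α := ℝ)])]
        exact setIntegral_le_integral hHi (Eventually.of_forall hH0)
    _ = ∫ v in Ioi 0, G v := integral_indicator measurableSet_Ioi

lemma summable_natCast_add_of_backwardSum_le {F : ℝ → ℝ} (hF : 0 ≤ F) {c : ℝ}
    (hc : ∀ N t, backwardSum F N t ≤ c) (a : ℝ) : Summable fun k : ℕ => F (k + a) := by
  refine summable_of_sum_range_le (c := c) (fun k => hF _) fun N => ?_
  refine le_of_eq_of_le ?_ (hc N (N - 1 + a))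
  rw [← Finset.sum_range_reflect, backwardSum]
  refine Finset.sum_congr rfl fun n hn => ?_
  have hn' : n + 1 ≤ N := Finset.mem_range.1 hn
  rw [Nat.sub_sub, add_comm 1 n, Nat.cast_sub hn']
  push_cast
  ring_nf

lemma backwardSum_add {F G : ℝ → ℝ} (N : ℕ) (t : ℝ) :
    backwardSum (F + G) N t = backwardSum F N t + backwardSum G N t :=
  Finset.sum_add_distrib

lemma backwardSum_indicator_Ici_eq_zero {F : ℝ → ℝ} {t : ℝ} (ht : t < 0) (N : ℕ) :
    backwardSum ((Ici 0).indicator F) N t = 0 :=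
  Finset.sum_eq_zero fun n _ => indicator_of_notMem
    (by simpa using ht.trans_le n.cast_nonneg) _

lemma backwardSum_le_add_sum {ι : Type*} (I : Finset ι) (a b : ι → ℝ) {F g : ℝ → ℝ}
    {H : ι → ℝ → ℝ} (hF : ∀ t, F t ≤ g t + ∑ e ∈ I, a e * H e (t + b e)) (N : ℕ) (t : ℝ) :
    backwardSum F N t ≤ backwardSum g N t + ∑ e ∈ I, a e * backwardSum (H e) N (t + b e) := by
  simp only [backwardSum, Finset.mul_sum]
  rw [Finset.sum_comm, ← Finset.sum_add_distrib]
  refine Finset.sum_le_sum fun n _ => (hF (t - n)).trans_eq ?_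
  simp only [sub_add_eq_add_sub]

lemma backwardSum_indicator_scaledCoveringNumber_le {d : ℕ} {s : ℝ} {A : Set (Pt d)} (hs : 0 ≤ s)
    (hA : Bornology.IsBounded A)
    (hfin : ∫⁻ t in Ioi 0, ENNReal.ofReal (scaledCoveringNumber s A t) < ⊤) (N : ℕ) (t : ℝ) :
    backwardSum ((Ici 0).indicator (scaledCoveringNumber s A)) N t ≤
      ∫ v in Ioi 0, Real.exp s * scaledCoveringNumber s A v :=
  backwardSum_indicator_le_integral
    (fun _ => mul_nonneg (Real.exp_nonneg s) scaledCoveringNumber_nonneg)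
    ((integrableOn_scaledCoveringNumber hA hfin).const_mul _)
    (fun _ _ _ huv hvu => scaledCoveringNumber_le_exp_mul hs hA huv hvu) N t

lemma backwardSum_indicator_Iic_le {B : ℝ} (hB : 0 ≤ B) (T : ℝ) (N : ℕ) (t : ℝ) :
    backwardSum ((Ici 0).indicator ((Iic T).indicator fun _ => B)) N t ≤
      ∫ v in Ioi 0, (Iic (T + 1)).indicator (fun _ => B) v := by
  refine backwardSum_indicator_le_integral (indicator_nonneg fun _ _ => hB) ?_ ?_ N t
  · rw [integrableOn_indicator_iff measurableSet_Iic]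
    refine integrableOn_const ?_
    rw [inter_comm, Ioi_inter_Iic]
    exact measure_Ioc_lt_top.ne
  · intro u v _ _ hvu
    by_cases hu : u ≤ T
    · rw [indicator_of_mem (mem_Iic.2 hu), indicator_of_mem (mem_Iic.2 (by linarith))]
    · rw [indicator_of_notMem (by simpa using hu)]
      exact indicator_nonneg (fun _ _ => hB) v

lemma backwardSum_sum {ι : Type*} (I : Finset ι) (F : ι → ℝ → ℝ) (N : ℕ) (t : ℝ) :
    backwardSum (fun u => ∑ i ∈ I, F i u) N t = ∑ i ∈ I, backwardSum (F i) N t :=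
  Finset.sum_comm

lemma exists_le_of_backwardSum_le {d : ℕ} {s : ℝ} {ι : Type*} [Finite ι] {C K : ι → Set (Pt d)}
    (hs : 0 ≤ s) (hC : ∀ i, Bornology.IsBounded (C i)) (hK : ∀ i, Bornology.IsBounded (K i))
    (hint : ∀ i, ∫⁻ t in Ioi 0, ENNReal.ofReal (scaledCoveringNumber s (C i) t) < ⊤) (T : ℝ) :
    ∃ (g : ℝ → ℝ) (c : ℝ), 0 ≤ g ∧ (∀ N t, backwardSum g N t ≤ c) ∧
      (∀ i t, 0 ≤ t → scaledCoveringNumber s (C i) t ≤ g t) ∧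
      ∀ i, ∀ A ⊆ K i, ∀ t, 0 ≤ t → t ≤ T → scaledCoveringNumber s A t ≤ g t := by
  cases nonempty_fintype ι
  set B : ι → ℝ := fun i => (coveringNumber (K i) (Real.exp (-T)) : ℝ)
  have hB : ∀ i, 0 ≤ B i := fun i => Nat.cast_nonneg _
  set q : ι → ℝ → ℝ := fun i => (Ici 0).indicator (scaledCoveringNumber s (C i)) +
    (Ici 0).indicator ((Iic T).indicator fun _ => B i)
  have hq1 : ∀ i t, 0 ≤ (Ici 0).indicator (scaledCoveringNumber s (C i)) t := fun i t =>
    indicator_nonneg (fun _ _ => scaledCoveringNumber_nonneg) t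
  have hq2 : ∀ i t, 0 ≤ (Ici 0).indicator ((Iic T).indicator fun _ => B i) t := fun i t =>
    indicator_nonneg (fun _ _ => indicator_nonneg (fun _ _ => hB i) _) t
  have hq : ∀ i t, q i t ≤ ∑ j, q j t := fun i t =>
    Finset.single_le_sum (f := fun j => q j t) (fun j _ => add_nonneg (hq1 j t) (hq2 j t))
      (Finset.mem_univ i)
  refine ⟨fun t => ∑ i, q i t, ∑ i, ((∫ v in Ioi 0, Real.exp s * scaledCoveringNumber s (C i) v) +
    ∫ v in Ioi 0, (Iic (T + 1)).indicator (fun _ => B i) v),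
    fun t => Finset.sum_nonneg fun i _ => add_nonneg (hq1 i t) (hq2 i t), fun N t => ?_,
    fun i t ht => le_trans ?_ (hq i t), fun i A hA t ht htT => le_trans ?_ (hq i t)⟩
  · rw [backwardSum_sum]
    refine Finset.sum_le_sum fun i _ => (backwardSum_add N t).trans_le ?_
    exact add_le_add (backwardSum_indicator_scaledCoveringNumber_le hs (hC i) (hint i) N t)
      (backwardSum_indicator_Iic_le (hB i) T N t)
  · exact le_add_of_le_of_nonneg (indicator_of_mem (mem_Ici.2 ht) _).ge (hq2 i t)
  · refine le_add_of_nonneg_of_le (hq1 i t) ?_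
    rw [indicator_of_mem (mem_Ici.2 ht), indicator_of_mem (mem_Iic.2 htT)]
    exact (scaledCoveringNumber_mono (hK i) hA).trans
      (scaledCoveringNumber_le_coveringNumber hs (hK i) ht htT)

end BackwardSum

section Perron

open Matrix

lemma exists_nnnorm_pow_le_of_spectralRadius_lt {R : Type*} [NormedRing R] [NormedAlgebra ℂ R]
    [CompleteSpace R] {a : R} {l : NNReal} (hl : spectralRadius ℂ a < l) :
    ∃ N : ℕ, N ≠ 0 ∧ ‖a ^ N‖₊ ≤ l ^ N := by
  have hlim := spectrum.pow_nnnorm_pow_one_div_tendsto_nhds_spectralRadius a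
  obtain ⟨N, hN, hN1⟩ :=
    ((hlim.eventually (gt_mem_nhds hl)).and (eventually_ge_atTop 1)).exists
  have hN0 : (0 : ℝ) < N := by exact_mod_cast hN1
  refine ⟨N, Nat.one_le_iff_ne_zero.1 hN1, ?_⟩
  have hpow := ENNReal.rpow_le_rpow hN.le hN0.le
  rw [← ENNReal.rpow_mul, one_div_mul_cancel hN0.ne', ENNReal.rpow_one, ENNReal.rpow_natCast]
    at hpow
  exact_mod_cast hpow

variable {V : Type} [Fintype V] {A : Matrix V V ℝ}

lemma mulVec_nonneg_of_nonneg (hA : ∀ i j, 0 ≤ A i j) {v : V → ℝ} (hv : 0 ≤ v) : 0 ≤ A *ᵥ v :=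
  fun i => Finset.sum_nonneg fun j _ => mul_nonneg (hA i j) (hv j)

lemma exists_mem_stdSimplex_mulVec_le_smul [Nonempty V] {l : ℝ} {h : V → ℝ} (h1 : 1 ≤ h)
    (hle : A *ᵥ h ≤ l • h) : ∃ v ∈ stdSimplex ℝ V, A *ᵥ v ≤ l • v := by
  have hpos : 0 < ∑ i, h i :=
    Finset.sum_pos (fun i _ => zero_lt_one.trans_le (h1 i)) Finset.univ_nonempty
  refine ⟨(∑ i, h i)⁻¹ • h, ⟨fun i => ?_, ?_⟩, ?_⟩
  · exact mul_nonneg (inv_nonneg.2 hpos.le) (zero_le_one.trans (h1 i))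
  · simp only [Pi.smul_apply, smul_eq_mul, ← Finset.mul_sum]
    exact inv_mul_cancel₀ hpos.ne'
  · rw [Matrix.mulVec_smul, smul_comm l]
    exact smul_le_smul_of_nonneg_left hle (inv_nonneg.2 hpos.le)

variable [DecidableEq V]

lemma norm_le_matrixSpectralRadius {μ : ℂ}
    (hμ : μ ∈ spectrum ℂ (A.map fun a : ℝ => (a : ℂ))) : ‖μ‖ ≤ matrixSpectralRadius A := by
  refine le_csSup ?_ ⟨μ, hμ, rfl⟩
  refine ((Matrix.finite_spectrum (A.map fun a : ℝ => (a : ℂ))).image norm).bddAbove.mono ?_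
  rintro x ⟨ν, hν, rfl⟩
  exact mem_image_of_mem norm hν

attribute [local instance] Matrix.linftyOpNormedRing Matrix.linftyOpNormedAlgebra

lemma mulVec_one_apply_le_linftyOpNorm (B : Matrix V V ℝ) (i : V) :
    (B *ᵥ 1) i ≤ ‖B.map fun a : ℝ => (a : ℂ)‖ := by
  have hrow : ∑ j, ‖B i j‖₊ ≤ ‖B.map fun a : ℝ => (a : ℂ)‖₊ := by
    rw [Matrix.linfty_opNNNorm_def]
    simpa only [Matrix.map_apply, Complex.nnnorm_real] using
      Finset.le_sup (f := fun i => ∑ j, ‖B i j‖₊) (Finset.mem_univ i)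
  calc (B *ᵥ 1) i = ∑ j, B i j := by simp [Matrix.mulVec, dotProduct]
    _ ≤ ∑ j, ‖B i j‖ := Finset.sum_le_sum fun j _ => le_abs_self _
    _ ≤ ‖B.map fun a : ℝ => (a : ℂ)‖ := by
      simpa only [NNReal.coe_sum, coe_nnnorm] using NNReal.coe_le_coe.2 hrow

lemma exists_pow_mulVec_one_le {l : ℝ} (hl : 0 < l) (hρ : matrixSpectralRadius A < l) :
    ∃ N : ℕ, N ≠ 0 ∧ ∀ i, (A ^ N *ᵥ 1) i ≤ l ^ N := by
  have : CompleteSpace (Matrix V V ℂ) := FiniteDimensional.complete ℂ _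
  have hrad : spectralRadius ℂ (A.map fun a : ℝ => (a : ℂ)) < ENNReal.ofReal l := by
    refine lt_of_le_of_lt (iSup₂_le fun μ hμ => ?_) ((ENNReal.ofReal_lt_ofReal_iff hl).2 hρ)
    exact (ofReal_norm μ).symm.trans_le
      (ENNReal.ofReal_le_ofReal (norm_le_matrixSpectralRadius hμ))
  obtain ⟨N, hN0, hN⟩ := exists_nnnorm_pow_le_of_spectralRadius_lt hrad
  refine ⟨N, hN0, fun i => (mulVec_one_apply_le_linftyOpNorm (A ^ N) i).trans ?_⟩
  have hmap : (A ^ N).map (fun a : ℝ => (a : ℂ)) = (A.map fun a : ℝ => (a : ℂ)) ^ N :=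
    map_pow Complex.ofRealHom.mapMatrix A N
  rw [hmap, ← Real.coe_toNNReal l hl.le]
  exact_mod_cast hN

lemma exists_one_le_mulVec_le_smul (hA : ∀ i j, 0 ≤ A i j) {l : ℝ} (hl : 0 < l) {N : ℕ}
    (hN0 : N ≠ 0) (hN : ∀ i, (A ^ N *ᵥ 1) i ≤ l ^ N) : ∃ h : V → ℝ, 1 ≤ h ∧ A *ᵥ h ≤ l • h := by
  let g : ℕ → V → ℝ := fun n => (l⁻¹ ^ n) • (A ^ n *ᵥ 1)
  have hg : ∀ n, 0 ≤ g n := fun n => by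
    refine smul_nonneg (by positivity) ?_
    induction n with
    | zero => simp [zero_le_one]
    | succ n ih =>
      rw [pow_succ', ← Matrix.mulVec_mulVec]
      exact mulVec_nonneg_of_nonneg hA ih
  have hg0 : g 0 = 1 := by simp [g]
  have hgN : g N ≤ 1 := fun i => by
    calc g N i ≤ l⁻¹ ^ N * l ^ N := mul_le_mul_of_nonneg_left (hN i) (by positivity)
      _ = 1 := by rw [← mul_pow, inv_mul_cancel₀ hl.ne', one_pow]
  have hstep : ∀ n, A *ᵥ g n = l • g (n + 1) := fun n => by
    simp only [g]
    rw [Matrix.mulVec_smul, Matrix.mulVec_mulVec, ← pow_succ', smul_smul, pow_succ l⁻¹,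
      mul_left_comm, mul_inv_cancel₀ hl.ne', mul_one]
  refine ⟨∑ n ∈ Finset.range N, g n, ?_, ?_⟩
  · rw [← hg0]
    exact Finset.single_le_sum (fun n _ => hg n) (Finset.mem_range.2 (Nat.pos_of_ne_zero hN0))
  · have htel : ∑ n ∈ Finset.range N, g (n + 1) + 1 = ∑ n ∈ Finset.range N, g n + g N := by
      rw [← Finset.sum_range_succ, Finset.sum_range_succ', hg0]
    have hshift : ∑ n ∈ Finset.range N, g (n + 1) ≤ ∑ n ∈ Finset.range N, g n :=
      le_of_add_le_add_right (htel.le.trans (add_le_add_right hgN _))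
    calc A *ᵥ ∑ n ∈ Finset.range N, g n = l • ∑ n ∈ Finset.range N, g (n + 1) := by
          simp only [Matrix.mulVec_sum, hstep, Finset.smul_sum]
      _ ≤ l • ∑ n ∈ Finset.range N, g n := smul_le_smul_of_nonneg_left hshift hl.le

lemma exists_mem_stdSimplex_mulVec_le [Nonempty V] (hA : ∀ i j, 0 ≤ A i j)
    (hρ : matrixSpectralRadius A ≤ 1) : ∃ v ∈ stdSimplex ℝ V, A *ᵥ v ≤ v := by
  have happrox : ∀ n : ℕ, ∃ v ∈ stdSimplex ℝ V, A *ᵥ v ≤ (1 + 1 / ((n : ℝ) + 1)) • v := fun n => by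
    have hl : (1 : ℝ) < 1 + 1 / ((n : ℝ) + 1) := lt_add_of_pos_right _ (by positivity)
    obtain ⟨N, hN0, hN⟩ := exists_pow_mulVec_one_le (by positivity) (hρ.trans_lt hl)
    obtain ⟨h, h1, hle⟩ := exists_one_le_mulVec_le_smul hA (by positivity) hN0 hN
    exact exists_mem_stdSimplex_mulVec_le_smul h1 hle
  choose v hv hle using happrox
  obtain ⟨w, hw, φ, hφ, hlim⟩ := (isCompact_stdSimplex ℝ V).tendsto_subseq hv
  have hlhs : Tendsto (fun n => A *ᵥ v (φ n)) atTop (𝓝 (A *ᵥ w)) :=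
    ((A.mulVecLin.continuous_of_finiteDimensional).tendsto w).comp hlim
  have hrhs : Tendsto (fun n => (1 + 1 / ((φ n : ℝ) + 1)) • v (φ n)) atTop (𝓝 ((1 + 0 : ℝ) • w)) :=
    (tendsto_const_nhds.add ((tendsto_one_div_add_atTop_nhds_zero_nat (𝕜 := ℝ)).comp
      hφ.tendsto_atTop)).smul hlim
  rw [add_zero, one_smul] at hrhs
  exact ⟨w, hw, le_of_tendsto_of_tendsto' hlhs hrhs fun n => hle (φ n)⟩

end Perron

namespace MWGraph

variable {d : ℕ} {V E : Type} [Fintype V] [Fintype E] [DecidableEq V] (G : MWGraph d V E)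
  {s : ℝ} {h : V → ℝ}

lemma Amatrix_nonneg (s : ℝ) (i j : V) : 0 ≤ G.Amatrix s i j :=
  Finset.sum_nonneg fun e _ => by
    split_ifs
    exacts [Real.rpow_nonneg (G.r_pos e).le s, le_rfl]

lemma Amatrix_mulVec_apply (s : ℝ) (h : V → ℝ) (i : V) :
    (G.Amatrix s).mulVec h i = ∑ e with G.init e = i, G.r e ^ s * h (G.term e) := by
  simp only [Matrix.mulVec, dotProduct, Amatrix, Matrix.of_apply, Finset.sum_mul]
  rw [Finset.sum_comm, Finset.sum_filter]
  refine Finset.sum_congr rfl fun e _ => ?_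
  by_cases he : G.init e = i <;> simp [he]

/-- `h` is a subinvariant vector of `A_G^s`, that is, `0 ≤ h` and `A_G^s h ≤ h`. -/
def IsSubinvariant (s : ℝ) (h : V → ℝ) : Prop :=
  (∀ i, 0 ≤ h i) ∧ ∀ i, ∑ e with G.init e = i, G.r e ^ s * h (G.term e) ≤ h i

variable {G}

lemma IsSubinvariant.rpow_mul_le (hh : G.IsSubinvariant s h) (e : E) :
    G.r e ^ s * h (G.term e) ≤ h (G.init e) := by
  refine le_trans ?_ (hh.2 (G.init e))
  exact Finset.single_le_sum (f := fun e => G.r e ^ s * h (G.term e))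
    (fun e' _ => mul_nonneg (Real.rpow_nonneg (G.r_pos e').le s) (hh.1 _)) (by simp)

lemma IsSubinvariant.pos_of_isPathFrom (hh : G.IsSubinvariant s h) {γ : List E} :
    ∀ {i : V}, G.IsPathFrom i γ → 0 < h (G.pathTerm i γ) → 0 < h i := by
  induction γ with
  | nil => exact fun _ h0 => h0
  | cons e γ ih =>
    rintro _ ⟨rfl, hγ⟩ h0
    exact (mul_pos (Real.rpow_pos_of_pos (G.r_pos e) s) (ih hγ h0)).trans_le (hh.rpow_mul_le e)

variable (G)

lemma exists_pos_isSubinvariant (hSC : G.StronglyConnected)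
    (hρ : matrixSpectralRadius (G.Amatrix s) ≤ 1) :
    ∃ h : V → ℝ, (∀ i, 0 < h i) ∧ G.IsSubinvariant s h := by
  rcases isEmpty_or_nonempty V with hV | hV
  · exact ⟨fun _ => 1, fun i => hV.elim i, fun i => hV.elim i, fun i => hV.elim i⟩
  obtain ⟨h, ⟨hnn, hsum⟩, hle⟩ := exists_mem_stdSimplex_mulVec_le (G.Amatrix_nonneg s) hρ
  have hh : G.IsSubinvariant s h :=
    ⟨hnn, fun i => (G.Amatrix_mulVec_apply s h i).symm.trans_le (hle i)⟩
  obtain ⟨j, -, hj⟩ : ∃ j ∈ Finset.univ, 0 < h j :=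
    Finset.exists_lt_of_sum_lt (by simp [hsum])
  refine ⟨h, fun i => ?_, hh⟩
  obtain ⟨γ, -, hγ, hend⟩ := hSC i j
  exact hh.pos_of_isPathFrom hγ (hend ▸ hj)

end MWGraph

lemma infDist_map_le_mul_infDist {X Y : Type*} [PseudoMetricSpace X] [ProperSpace X]
    [PseudoMetricSpace Y] {f : X → Y} {L : NNReal} (hf : LipschitzWith L f) {Z : Set X} {W : Set Y}
    (hZ : Z.Nonempty) (hZW : MapsTo f Z W) (y : X) :
    infDist (f y) W ≤ L * infDist y Z := by
  obtain ⟨z, hz, hyz⟩ := exists_mem_closure_infDist_eq_dist hZ y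
  rw [hyz, ← infDist_closure]
  exact (infDist_le_dist_of_mem (map_mem_closure hf.continuous hz hZW)).trans (hf.dist_le_mul y z)

namespace MWGraph

variable {d : ℕ} {V E : Type} [Fintype V] [Fintype E] (G : MWGraph d V E)
  {C K KC U : V → Set (Pt d)}

lemma lipschitzWith_S (e : E) : LipschitzWith ⟨G.r e, (G.r_pos e).le⟩ (G.S e) :=
  LipschitzWith.of_dist_le_mul fun x y => (G.S_sim e x y).le

lemma isHomeomorph_S (e : E) : IsHomeomorph (G.S e) :=
  isHomeomorph_of_dist_eq_mul_dist (G.r_pos e) (G.S_sim e)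

lemma exists_forall_mem_Icc_neg_log_r :
    ∃ τ T : ℝ, 0 < τ ∧ 0 ≤ T ∧ ∀ e, -Real.log (G.r e) ∈ Icc τ T := by
  rcases isEmpty_or_nonempty E with hE | hE
  · exact ⟨1, 0, one_pos, le_rfl, fun e => hE.elim e⟩
  have hpos : ∀ e, 0 < -Real.log (G.r e) := fun e =>
    neg_pos.2 (Real.log_neg (G.r_pos e) (G.r_lt_one e))
  obtain ⟨e₀, h₀⟩ := Finite.exists_min fun e => -Real.log (G.r e)
  obtain ⟨e₁, h₁⟩ := Finite.exists_max fun e => -Real.log (G.r e)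
  exact ⟨_, _, hpos e₀, (hpos e₁).le, fun e => ⟨h₀ e, h₁ e⟩⟩

variable {G}

lemma IsOSCWith.mapsTo_S (hU : G.IsOSCWith U) (e : E) :
    MapsTo (G.S e) (U (G.term e)) (U (G.init e)) := fun x hx =>
  hU.2.2.2.2.1 (G.init e) (mem_iUnion₂.2 ⟨e, rfl, x, hx, rfl⟩)

lemma IsInhomAttractor.mem_iff (hKC : G.IsInhomAttractor C KC) {i : V} {x : Pt d} :
    x ∈ KC i ↔ x ∈ C i ∨ ∃ e, G.init e = i ∧ x ∈ G.S e '' KC (G.term e) := by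
  conv_lhs => rw [hKC.2.2 i]
  simp only [mem_union, mem_iUnion₂, mem_ofPred_eq, exists_prop, or_comm]

lemma IsInhomAttractor.image_S_subset (hKC : G.IsInhomAttractor C KC) (e : E) :
    G.S e '' KC (G.term e) ⊆ KC (G.init e) := fun _ hx => hKC.mem_iff.2 (Or.inr ⟨e, rfl, hx⟩)

lemma IsInhomAttractor.isBounded_condensation (hKC : G.IsInhomAttractor C KC) (i : V) :
    Bornology.IsBounded (C i) :=
  (hKC.1 i).isBounded.subset fun _ hx => hKC.mem_iff.2 (Or.inl hx)

-- At a vertex and a point where the distance from `KC i` to `Z i` is maximal, passing to the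
-- preimage under `S e` would increase the distance unless it is zero.
lemma IsInhomAttractor.subset_closure_of_mapsTo (hKC : G.IsInhomAttractor C KC)
    {Z : V → Set (Pt d)} (hZ : ∀ i, (Z i).Nonempty)
    (hS : ∀ e, MapsTo (G.S e) (Z (G.term e)) (Z (G.init e))) (hCZ : ∀ i, C i ⊆ closure (Z i))
    (i : V) : KC i ⊆ closure (Z i) := by
  have hmax : ∀ j, ∃ x ∈ KC j, ∀ y ∈ KC j, infDist y (Z j) ≤ infDist x (Z j) := fun j =>
    (hKC.1 j).exists_isMaxOn (hKC.2.1 j) (continuous_infDist_pt _).continuousOn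
  choose x hx hxmax using hmax
  have : Nonempty V := ⟨i⟩
  obtain ⟨j, hj⟩ := Finite.exists_max fun j => infDist (x j) (Z j)
  have hle : ∀ k, ∀ y ∈ KC k, infDist y (Z k) ≤ infDist (x j) (Z j) := fun k y hy =>
    (hxmax k y hy).trans (hj k)
  have hzero : infDist (x j) (Z j) ≤ 0 := by
    rcases hKC.mem_iff.1 (hx j) with hxC | ⟨e, rfl, y, hy, hyx⟩
    · exact ((mem_closure_iff_infDist_zero (hZ j)).1 (hCZ j hxC)).le
    · have hstep : infDist (G.S e y) (Z (G.init e)) ≤ G.r e * infDist y (Z (G.term e)) :=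
        infDist_map_le_mul_infDist (G.lipschitzWith_S e) (hZ (G.term e)) (hS e) y
      rw [hyx] at hstep
      have hmul := mul_le_mul_of_nonneg_left (hle _ y hy) (G.r_pos e).le
      nlinarith [G.r_lt_one e]
  exact fun y hy => (mem_closure_iff_infDist_zero (hZ i)).2
    (le_antisymm ((hle i y hy).trans hzero) infDist_nonneg)

variable (G)

lemma pathRatio_cons (e : E) (w : List E) :
    G.pathRatio (e :: w) = G.r e * G.pathRatio w := by
  rw [pathRatio, List.map_cons, List.prod_cons, pathRatio]

lemma pathRatio_pos (w : List E) : 0 < G.pathRatio w :=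
  List.prod_pos fun x hx => by
    obtain ⟨e, -, rfl⟩ := List.mem_map.1 hx
    exact G.r_pos e

lemma dist_pathMap (w : List E) (x y : Pt d) :
    dist (G.pathMap w x) (G.pathMap w y) = G.pathRatio w * dist x y := by
  induction w with
  | nil => simp [pathMap, pathRatio]
  | cons e w ih =>
    simp only [pathMap, Function.comp_apply, G.S_sim, ih, pathRatio_cons, mul_assoc]

lemma pathRatio_le_exp {τ : ℝ} (hτ : ∀ e, τ ≤ -Real.log (G.r e)) (w : List E) :
    G.pathRatio w ≤ Real.exp (-τ) ^ w.length := by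
  induction w with
  | nil => simp [pathRatio]
  | cons e w ih =>
    have hr : G.r e ≤ Real.exp (-τ) := by
      rw [← Real.exp_log (G.r_pos e)]
      exact Real.exp_le_exp.2 (by linarith [hτ e])
    rw [pathRatio_cons, List.length_cons, pow_succ']
    exact mul_le_mul hr ih (G.pathRatio_pos w).le (Real.exp_nonneg _)

variable {G}

lemma IsAttractor.exists_mem_image_pathMap (hK : G.IsAttractor K) (n : ℕ) :
    ∀ {i : V}, ∀ x ∈ K i, ∃ w : List E, w.length = n ∧ G.IsPathFrom i w ∧
      x ∈ G.pathMap w '' K (G.pathTerm i w) := by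
  induction n with
  | zero => exact fun x hx => ⟨[], rfl, trivial, x, hx, rfl⟩
  | succ n ih =>
    intro i x hx
    rw [hK.2.2 i] at hx
    obtain ⟨e, he, y, hy, rfl⟩ := mem_iUnion₂.1 hx
    obtain ⟨w, hwn, hw, z, hz, rfl⟩ := ih y hy
    exact ⟨e :: w, by rw [List.length_cons, hwn], ⟨he, hw⟩, z, hz, rfl⟩

/-- The cell `S_w (K_{t(w)})` of the path `w` starting at `i`. -/
def cell (G : MWGraph d V E) (K : V → Set (Pt d)) (i : V) (w : List E) : Set (Pt d) :=
  G.pathMap w '' K (G.pathTerm i w)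

lemma preimage_S_cell_cons (i : V) (e : E) (w : List E) :
    G.S e ⁻¹' G.cell K i (e :: w) = G.cell K (G.term e) w := by
  rw [cell, pathMap, image_comp, (G.isHomeomorph_S e).injective.preimage_image]
  rfl

lemma exists_disjoint_cell_thickening (hK : G.IsAttractor K) (hKC : ∀ i, IsCompact (KC i))
    {i : V} {O : Set (Pt d)} (hO : IsOpen O) (hOK : (O ∩ K i).Nonempty) :
    ∃ w, G.IsPathFrom i w ∧ ∃ δ > 0, Disjoint (G.cell KC i w) (thickening δ Oᶜ) := by
  obtain ⟨x, hxO, hxK⟩ := hOK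
  obtain ⟨ε, hε, hball⟩ := isOpen_iff.1 hO x hxO
  obtain ⟨τ, _, hτ, -, hlog⟩ := G.exists_forall_mem_Icc_neg_log_r
  obtain ⟨D, hD⟩ : ∃ D, ∀ j, ∀ y ∈ K j, ∀ z ∈ KC j, dist y z ≤ D := by
    have hbdd : Bornology.IsBounded (⋃ j, K j ∪ KC j) :=
      Bornology.isBounded_iUnion.2 fun j => ((hK.1 j).union (hKC j)).isBounded
    obtain ⟨D, hD⟩ := isBounded_iff.1 hbdd
    exact ⟨D, fun j y hy z hz =>
      hD (mem_iUnion_of_mem j (Or.inl hy)) (mem_iUnion_of_mem j (Or.inr hz))⟩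
  have hlim : Tendsto (fun n : ℕ => Real.exp (-τ) ^ n * D) atTop (𝓝 (0 * D)) :=
    (tendsto_pow_atTop_nhds_zero_of_lt_one (Real.exp_nonneg _)
      (Real.exp_lt_one_iff.2 (neg_neg_of_pos hτ))).mul_const D
  rw [zero_mul] at hlim
  obtain ⟨n, hn⟩ := (hlim.eventually (gt_mem_nhds (half_pos hε))).exists
  obtain ⟨w, rfl, hw, x', hx', rfl⟩ := hK.exists_mem_image_pathMap n x hxK
  refine ⟨w, hw, ε / 2, half_pos hε, Set.disjoint_left.2 ?_⟩
  rintro _ ⟨y, hy, rfl⟩ hthick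
  obtain ⟨z, hz, hyz⟩ := mem_thickening_iff.1 hthick
  have hxy : dist (G.pathMap w x') (G.pathMap w y) < ε / 2 := by
    rw [G.dist_pathMap]
    refine lt_of_le_of_lt ?_ hn
    exact mul_le_mul (G.pathRatio_le_exp (fun e => (hlog e).1) w) (hD _ x' hx' y hy) dist_nonneg
      (by positivity)
  exact hz (hball (mem_ball'.2 ((dist_triangle _ _ _).trans_lt (by linarith))))

-- The closures are needed because the condensation sets lie only in the closures of the `U i`.
lemma IsOSCWith.disjoint_image_closure (hU : G.IsOSCWith U) {e e' : E}
    (hinit : G.init e = G.init e') (hne : e ≠ e') :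
    Disjoint (G.S e '' U (G.term e)) (G.S e' '' closure (U (G.term e'))) :=
  ((hU.2.2.2.2.2 e e' hinit hne).closure_right
    ((G.isHomeomorph_S e).isOpenMap _ (hU.2.1 _))).mono_right
      (image_closure_subset_closure_image (G.isHomeomorph_S e').continuous)

lemma mem_thickening_compl_of_dist_S_lt {e : E} {y z : Pt d} {c t : ℝ}
    (hz : z ∉ G.S e '' U (G.term e)) (hyz : dist (G.S e y) z < c * Real.exp (-t)) :
    y ∈ thickening (c * Real.exp (-(t + Real.log (G.r e)))) (U (G.term e))ᶜ := by
  obtain ⟨x, rfl⟩ := (G.isHomeomorph_S e).surjective z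
  refine mem_thickening_iff.2 ⟨x, fun hx => hz (mem_image_of_mem _ hx), ?_⟩
  rw [neg_add, Real.exp_add, Real.exp_neg (Real.log _), Real.exp_log (G.r_pos e), ← mul_assoc,
    ← div_eq_mul_inv, lt_div_iff₀' (G.r_pos e), ← G.S_sim]
  exact hyz

end MWGraph

section LayerCoveringNumber

/-- The rescaled covering number of the part of `A` within distance `c e^{-t}`, a fixed multiple of
the covering radius, of the complement of `U`. -/
def layerCoveringNumber {d : ℕ} (s c : ℝ) (U A : Set (Pt d)) (t : ℝ) : ℝ :=
  scaledCoveringNumber s (A ∩ thickening (c * Real.exp (-t)) Uᶜ) t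

variable {d : ℕ} {s c t : ℝ} {U A B : Set (Pt d)}

lemma layerCoveringNumber_nonneg : 0 ≤ layerCoveringNumber s c U A t :=
  scaledCoveringNumber_nonneg

lemma layerCoveringNumber_mono (hB : Bornology.IsBounded B) (hAB : A ⊆ B) :
    layerCoveringNumber s c U A t ≤ layerCoveringNumber s c U B t :=
  scaledCoveringNumber_mono (hB.subset inter_subset_left) (inter_subset_inter_left _ hAB)

lemma layerCoveringNumber_empty : layerCoveringNumber s c U ∅ t = 0 := by
  simp [layerCoveringNumber, scaledCoveringNumber, coveringNumber_empty]

lemma layerCoveringNumber_le_exp_mul (hs : 0 ≤ s) (hc : 0 ≤ c) (hA : Bornology.IsBounded A)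
    {u v : ℝ} (huv : u ≤ v) (hvu : v ≤ u + 1) :
    layerCoveringNumber s c U A u ≤ Real.exp s * layerCoveringNumber s (c * Real.exp 1) U A v := by
  have hwidth : c * Real.exp (-u) ≤ c * Real.exp 1 * Real.exp (-v) := by
    rw [mul_assoc, ← Real.exp_add]
    exact mul_le_mul_of_nonneg_left (Real.exp_le_exp.2 (by linarith)) hc
  calc layerCoveringNumber s c U A u
      ≤ scaledCoveringNumber s (A ∩ thickening (c * Real.exp 1 * Real.exp (-v)) Uᶜ) u :=
        scaledCoveringNumber_mono (hA.subset inter_subset_left)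
          (inter_subset_inter_right _ (thickening_mono hwidth _))
    _ ≤ Real.exp s * layerCoveringNumber s (c * Real.exp 1) U A v :=
        scaledCoveringNumber_le_exp_mul hs (hA.subset inter_subset_left) huv hvu

lemma layerCoveringNumber_le_diff {D : Set (Pt d)} {δ : ℝ} (hA : Bornology.IsBounded A)
    (hD : Disjoint D (thickening δ Uᶜ)) (ht : c * Real.exp (-t) ≤ δ) :
    layerCoveringNumber s c U A t ≤ layerCoveringNumber s c U (A \ D) t :=
  scaledCoveringNumber_mono ((hA.subset sdiff_subset).subset inter_subset_left) fun _ hx =>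
    ⟨⟨hx.1, fun hxD => Set.disjoint_left.1 hD hxD (thickening_mono ht _ hx.2)⟩, hx.2⟩

end LayerCoveringNumber

namespace MWGraph

variable {d : ℕ} {V E : Type} [Fintype V] [Fintype E] {G : MWGraph d V E}
  {C K KC U : V → Set (Pt d)} {s c t : ℝ}

lemma scaledCoveringNumber_union_biUnion_image_le {D : Set (Pt d)} (hD : Bornology.IsBounded D)
    (F : Finset E) {B : E → Set (Pt d)} (hB : ∀ e ∈ F, Bornology.IsBounded (B e)) :
    scaledCoveringNumber s (D ∪ ⋃ e ∈ F, G.S e '' B e) t ≤ scaledCoveringNumber s D t +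
      ∑ e ∈ F, G.r e ^ s * scaledCoveringNumber s (B e) (t + Real.log (G.r e)) := by
  have hSB : ∀ e ∈ F, Bornology.IsBounded (G.S e '' B e) := fun e he =>
    isBounded_image_of_dist_eq_mul_dist (G.r_pos e).le (G.S_sim e) (hB e he)
  simp only [← scaledCoveringNumber_image_of_dist_eq_mul_dist (G.r_pos _) (G.S_sim _)]
  refine (scaledCoveringNumber_union_le hD ((Bornology.isBounded_biUnion_finset F).2 hSB)).trans ?_
  gcongr
  exact scaledCoveringNumber_biUnion_le F _ hSB

variable [DecidableEq V]

lemma IsInhomAttractor.eq_union_biUnion (hKC : G.IsInhomAttractor C KC) (i : V) :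
    KC i = C i ∪ ⋃ e ∈ ({e | G.init e = i} : Finset E), G.S e '' KC (G.term e) := by
  ext x
  simp only [hKC.mem_iff, mem_union, mem_iUnion₂, Finset.mem_filter, Finset.mem_univ, true_and,
    exists_prop]

lemma IsInhomAttractor.layerCoveringNumber_le (hKC : G.IsInhomAttractor C KC)
    (hU : G.IsOSCWith U) {i : V} {A : Set (Pt d)} (hA : A ⊆ KC i) :
    layerCoveringNumber s c (U i) A t ≤ scaledCoveringNumber s (C i) t +
      ∑ e with G.init e = i, G.r e ^ s * layerCoveringNumber s c (U (G.term e))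
        (KC (G.term e) ∩ G.S e ⁻¹' A) (t + Real.log (G.r e)) := by
  have hB : ∀ e, Bornology.IsBounded (KC (G.term e) ∩ G.S e ⁻¹' A ∩
      thickening (c * Real.exp (-(t + Real.log (G.r e)))) (U (G.term e))ᶜ) := fun e =>
    (hKC.1 _).isBounded.subset (inter_subset_left.trans inter_subset_left)
  refine (scaledCoveringNumber_mono ?_ ?_).trans
    (scaledCoveringNumber_union_biUnion_image_le (hKC.isBounded_condensation i) _ fun e _ => hB e)
  · exact (hKC.isBounded_condensation i).union ((Bornology.isBounded_biUnion_finset _).2 fun e _ =>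
      isBounded_image_of_dist_eq_mul_dist (G.r_pos e).le (G.S_sim e) (hB e))
  · rintro x ⟨hxA, hx⟩
    rcases hKC.mem_iff.1 (hA hxA) with hxC | ⟨e, rfl, y, hy, rfl⟩
    · exact Or.inl hxC
    obtain ⟨z, hz, hyz⟩ := mem_thickening_iff.1 hx
    have hzS : z ∉ G.S e '' U (G.term e) := fun hzS => hz ((hU.mapsTo_S e).image_subset hzS)
    exact Or.inr (mem_iUnion₂.2 ⟨e, by simp, y,
      ⟨⟨hy, hxA⟩, mem_thickening_compl_of_dist_S_lt hzS hyz⟩, rfl⟩)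

lemma IsInhomAttractor.inter_closedBall_subset (hKC : G.IsInhomAttractor C KC)
    (hU : G.IsOSCWith U) (hKU : ∀ i, KC i ⊆ closure (U i)) {e e' : E}
    (hinit : G.init e = G.init e') (hne : e ≠ e') {x : Pt d}
    (he : (G.S e '' KC (G.term e) ∩ closedBall x (Real.exp (-t))).Nonempty)
    (he' : (G.S e' '' KC (G.term e') ∩ closedBall x (Real.exp (-t))).Nonempty) :
    KC (G.init e) ∩ closedBall x (Real.exp (-t)) ⊆
      C (G.init e) ∪ ⋃ a ∈ ({a | G.init a = G.init e} : Finset E), G.S a '' (KC (G.term a) ∩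
        thickening (3 * Real.exp (-(t + Real.log (G.r a)))) (U (G.term a))ᶜ) := by
  rintro y ⟨hyK, hyx⟩
  rcases hKC.mem_iff.1 hyK with hyC | ⟨a, ha, z, hz, rfl⟩
  · exact Or.inl hyC
  obtain ⟨b, hab, hb, w, hw, hwx⟩ : ∃ b, a ≠ b ∧ G.init b = G.init e ∧
      (G.S b '' KC (G.term b) ∩ closedBall x (Real.exp (-t))).Nonempty := by
    by_cases hae : a = e
    · exact ⟨e', hae ▸ hne, hinit.symm, he'⟩
    · exact ⟨e, hae, rfl, he⟩
  have hwU : w ∉ G.S a '' U (G.term a) := fun hwU =>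
    Set.disjoint_left.1 (hU.disjoint_image_closure (ha.trans hb.symm) hab) hwU
      (image_mono (hKU _) hw)
  have hdist : dist (G.S a z) w < 3 * Real.exp (-t) := by
    linarith [dist_triangle_right (G.S a z) w x, mem_closedBall.1 hyx, mem_closedBall.1 hwx,
      Real.exp_pos (-t)]
  exact Or.inr (mem_iUnion₂.2 ⟨a, by simp [ha], z,
    ⟨hz, mem_thickening_compl_of_dist_S_lt hwU hdist⟩, rfl⟩)

lemma IsInhomAttractor.scaledCoveringNumber_le (hKC : G.IsInhomAttractor C KC) (i : V) :
    scaledCoveringNumber s (KC i) t ≤ scaledCoveringNumber s (C i) t + ∑ e with G.init e = i,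
      G.r e ^ s * scaledCoveringNumber s (KC (G.term e)) (t + Real.log (G.r e)) := by
  conv_lhs => rw [hKC.eq_union_biUnion i]
  exact scaledCoveringNumber_union_biUnion_image_le (hKC.isBounded_condensation i) _
    fun e _ => (hKC.1 _).isBounded

lemma IsInhomAttractor.sum_scaledCoveringNumber_le (hKC : G.IsInhomAttractor C KC)
    (hU : G.IsOSCWith U) (hKU : ∀ i, KC i ⊆ closure (U i)) (i : V) :
    ∑ e with G.init e = i,
        G.r e ^ s * scaledCoveringNumber s (KC (G.term e)) (t + Real.log (G.r e)) ≤
      scaledCoveringNumber s (KC i) t + Fintype.card E * (scaledCoveringNumber s (C i) t +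
        ∑ e with G.init e = i, G.r e ^ s *
          layerCoveringNumber s 3 (U (G.term e)) (KC (G.term e)) (t + Real.log (G.r e))) := by
  set B : E → Set (Pt d) := fun e => KC (G.term e) ∩
    thickening (3 * Real.exp (-(t + Real.log (G.r e)))) (U (G.term e))ᶜ
  have hBb : ∀ e, Bornology.IsBounded (B e) := fun e => (hKC.1 _).isBounded.subset inter_subset_left
  have hD : Bornology.IsBounded (C i ∪ ⋃ e ∈ ({e | G.init e = i} : Finset E), G.S e '' B e) :=
    (hKC.isBounded_condensation i).union ((Bornology.isBounded_biUnion_finset _).2 fun e _ =>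
      isBounded_image_of_dist_eq_mul_dist (G.r_pos e).le (G.S_sim e) (hBb e))
  simp only [← scaledCoveringNumber_image_of_dist_eq_mul_dist (G.r_pos _) (G.S_sim _)]
  refine (_root_.sum_scaledCoveringNumber_le _ _ (hKC.1 i).isBounded hD ?_ ?_).trans ?_
  · intro e he
    obtain rfl : G.init e = i := (Finset.mem_filter.1 he).2
    exact hKC.image_S_subset e
  · intro x e he e' he' hne hx hx'
    obtain rfl : G.init e = i := (Finset.mem_filter.1 he).2
    exact hKC.inter_closedBall_subset hU hKU (Finset.mem_filter.1 he').2.symm hne hx hx'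
  · gcongr
    · exact scaledCoveringNumber_nonneg
    · exact Finset.card_le_univ _
    · exact scaledCoveringNumber_union_biUnion_image_le (hKC.isBounded_condensation i) _
        fun e _ => hBb e

lemma IsInhomAttractor.abs_scaledCoveringNumber_sub_sum_le (hKC : G.IsInhomAttractor C KC)
    (hU : G.IsOSCWith U) (hKU : ∀ i, KC i ⊆ closure (U i)) (i : V) :
    |scaledCoveringNumber s (KC i) t - ∑ e with G.init e = i,
      G.r e ^ s * scaledCoveringNumber s (KC (G.term e)) (t + Real.log (G.r e))| ≤
    (Fintype.card E + 1) * (scaledCoveringNumber s (C i) t + ∑ e with G.init e = i, G.r e ^ s *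
      layerCoveringNumber s 3 (U (G.term e)) (KC (G.term e)) (t + Real.log (G.r e))) := by
  have hlayer : 0 ≤ ∑ e with G.init e = i, G.r e ^ s *
      layerCoveringNumber s 3 (U (G.term e)) (KC (G.term e)) (t + Real.log (G.r e)) :=
    Finset.sum_nonneg fun e _ =>
      mul_nonneg (Real.rpow_nonneg (G.r_pos e).le s) layerCoveringNumber_nonneg
  have hC0 : 0 ≤ scaledCoveringNumber s (C i) t := scaledCoveringNumber_nonneg
  have hE : (0 : ℝ) ≤ Fintype.card E := Nat.cast_nonneg _
  have hupper := hKC.scaledCoveringNumber_le (s := s) (t := t) i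
  have hlower := hKC.sum_scaledCoveringNumber_le (s := s) (t := t) hU hKU i
  rw [abs_le]
  constructor <;> nlinarith [mul_nonneg hE (add_nonneg hC0 hlayer)]

end MWGraph

lemma exists_forall_mul_le {ι : Type*} [Finite ι] {a b : ι → ℝ} (hb : ∀ i, 0 < b i) :
    ∃ R : ℝ, 0 ≤ R ∧ ∀ i, a i ≤ R * b i := by
  obtain ⟨R, hR⟩ := Finite.bddAbove_range fun i => a i / b i
  exact ⟨max R 0, le_max_right _ _, fun i => (div_le_iff₀ (hb i)).1
    ((hR (mem_range_self i)).trans (le_max_left _ _))⟩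

namespace MWGraph

variable {d : ℕ} {V E : Type} [Fintype V] [Fintype E] [DecidableEq V] [DecidableEq E]
  {G : MWGraph d V E} {s c R τ T : ℝ} {h : V → ℝ} {Q : V → ℝ → ℝ} {P : V → List E → ℝ → ℝ}

/-- The renewal inequalities for functions `Q i` of which `P i w` is the share not coming from the
cell of the path `w` starting at `i`: nothing is left outside the cell of the empty path, and the
share outside the cell of `e :: w` is passed to `P` along `e` and to `Q` along the other edges,
up to the error `c`. -/
structure IsRenewalBound (G : MWGraph d V E) (s c : ℝ) (Q : V → ℝ → ℝ) (P : V → List E → ℝ → ℝ) :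
    Prop where
  nil_le : ∀ i t, P i [] t ≤ 0
  cons_le : ∀ e w t, P (G.init e) (e :: w) t ≤ c +
    (G.r e ^ s * P (G.term e) w (t + Real.log (G.r e)) +
      ∑ a ∈ Finset.erase {a | G.init a = G.init e} e,
        G.r a ^ s * Q (G.term a) (t + Real.log (G.r a)))

lemma IsSubinvariant.sum_erase_le (hh : G.IsSubinvariant s h) (hR : 0 ≤ R) (e : E) {q : E → ℝ}
    (hq : ∀ a, q a ≤ R * h (G.term a)) :
    ∑ a ∈ Finset.erase {a | G.init a = G.init e} e, G.r a ^ s * q a ≤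
      R * (h (G.init e) - G.r e ^ s * h (G.term e)) := by
  have hsplit := Finset.add_sum_erase {a | G.init a = G.init e}
    (fun a => G.r a ^ s * h (G.term a)) (by simp : e ∈ _)
  calc ∑ a ∈ Finset.erase {a | G.init a = G.init e} e, G.r a ^ s * q a
      ≤ ∑ a ∈ Finset.erase {a | G.init a = G.init e} e, G.r a ^ s * (R * h (G.term a)) :=
        Finset.sum_le_sum fun a _ =>
          mul_le_mul_of_nonneg_left (hq a) (Real.rpow_nonneg (G.r_pos a).le s)
    _ = R * ∑ a ∈ Finset.erase {a | G.init a = G.init e} e, G.r a ^ s * h (G.term a) := by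
        simp only [mul_left_comm _ R, ← Finset.mul_sum]
    _ ≤ R * (h (G.init e) - G.r e ^ s * h (G.term e)) :=
        mul_le_mul_of_nonneg_left (by linarith [hh.2 (G.init e)]) hR

lemma IsRenewalBound.le_of_isPathFrom (hQP : G.IsRenewalBound s c Q P)
    (hh : G.IsSubinvariant s h) (hs : 0 ≤ s) (hτ : ∀ e, τ ≤ -Real.log (G.r e)) (hc : 0 ≤ c)
    (hR : 0 ≤ R) (hQ : ∀ j, ∀ t < T, Q j t ≤ R * h j) (w : List E) :
    ∀ {i : V}, G.IsPathFrom i w → ∀ t < T + τ,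
      P i w t ≤ w.length * c + R * (h i - G.pathRatio w ^ s * h (G.pathTerm i w)) := by
  induction w with
  | nil =>
    intro i _ t _
    simpa [pathRatio, pathTerm] using hQP.nil_le i t
  | cons e w ih =>
    rintro _ ⟨rfl, hw⟩ t ht
    have hlog : Real.log (G.r e) ≤ 0 := Real.log_nonpos (G.r_pos e).le (G.r_lt_one e).le
    have hr : G.r e ^ s ≤ 1 := Real.rpow_le_one (G.r_pos e).le (G.r_lt_one e).le hs
    have hratio : G.pathRatio (e :: w) ^ s = G.r e ^ s * G.pathRatio w ^ s := by
      rw [pathRatio_cons, Real.mul_rpow (G.r_pos e).le (G.pathRatio_pos w).le]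
    have hfirst : G.r e ^ s * P (G.term e) w (t + Real.log (G.r e)) ≤
        G.r e ^ s * (w.length * c +
          R * (h (G.term e) - G.pathRatio w ^ s * h (G.pathTerm (G.term e) w))) :=
      mul_le_mul_of_nonneg_left (ih hw _ (by linarith)) (Real.rpow_nonneg (G.r_pos e).le s)
    have hrest : ∑ a ∈ Finset.erase {a | G.init a = G.init e} e,
        G.r a ^ s * Q (G.term a) (t + Real.log (G.r a)) ≤
          R * (h (G.init e) - G.r e ^ s * h (G.term e)) :=
      hh.sum_erase_le hR e fun a => hQ _ _ (by linarith [hτ a])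
    have herror : G.r e ^ s * (w.length * c) ≤ w.length * c :=
      mul_le_of_le_one_left (by positivity) hr
    rw [hratio, List.length_cons, Nat.cast_succ, pathTerm]
    linarith [hQP.cons_le e w t]

-- Induction on blocks of length `τ`. By `hcR`, the share `r_w ^ s * h` lost at the end of the path
-- `w i` outweighs the errors accumulated along it, so that `R` need not grow from block to block.
lemma IsRenewalBound.le_mul (hQP : G.IsRenewalBound s c Q P) (hh : G.IsSubinvariant s h)
    (hs : 0 ≤ s) (hτ0 : 0 < τ) (hτ : ∀ e, τ ≤ -Real.log (G.r e)) (hc : 0 ≤ c) (hR : 0 ≤ R)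
    (hneg : ∀ i, ∀ t < 0, Q i t ≤ 0) {w : V → List E} (hw : ∀ i, G.IsPathFrom i (w i))
    (hle : ∀ i t, Q i t ≤ c + P i (w i) t)
    (hcR : ∀ i, ((w i).length + 1) * c ≤
      R * (G.pathRatio (w i) ^ s * h (G.pathTerm i (w i)))) (i : V) (t : ℝ) :
    Q i t ≤ R * h i := by
  have hblock : ∀ (m : ℕ) (i : V), ∀ t < m * τ, Q i t ≤ R * h i := fun m => by
    induction m with
    | zero => exact fun i t ht => (hneg i t (by simpa using ht)).trans (mul_nonneg hR (hh.1 i))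
    | succ m ih =>
      intro i t ht
      have hpath := hQP.le_of_isPathFrom hh hs hτ hc hR ih (w i) (hw i) t
        (by push_cast at ht; linarith)
      linarith [hle i t, hcR i]
  obtain ⟨m, hm⟩ := exists_nat_gt (t / τ)
  exact hblock m i t ((div_lt_iff₀ hτ0).1 hm)

end MWGraph

section LayerSum

/-- The backward sum of the layer covering numbers, cut off at negative times. -/
def layerSum {d : ℕ} (s c : ℝ) (U A : Set (Pt d)) (N : ℕ) (t : ℝ) : ℝ :=
  backwardSum ((Ici 0).indicator (layerCoveringNumber s c U A)) N t

variable {d : ℕ} {s c : ℝ} {U A B : Set (Pt d)}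

lemma layerSum_mono (hB : Bornology.IsBounded B) (hAB : A ⊆ B) (N : ℕ) (t : ℝ) :
    layerSum s c U A N t ≤ layerSum s c U B N t :=
  backwardSum_mono (fun _ => indicator_le_indicator (layerCoveringNumber_mono hB hAB)) N t

lemma layerSum_empty (N : ℕ) (t : ℝ) : layerSum s c U ∅ N t = 0 := by
  rw [layerSum, backwardSum]
  exact Finset.sum_eq_zero fun _ _ => indicator_apply_eq_zero.2 fun _ => layerCoveringNumber_empty

lemma layerSum_le_add_diff {D : Set (Pt d)} {g : ℝ → ℝ} {δ T b : ℝ} (hA : Bornology.IsBounded A)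
    (hD : Disjoint D (thickening δ Uᶜ)) (hδ : ∀ t, T < t → c * Real.exp (-t) ≤ δ) (hg : 0 ≤ g)
    (hgb : ∀ N t, backwardSum g N t ≤ b)
    (hAg : ∀ t, 0 ≤ t → t ≤ T → layerCoveringNumber s c U A t ≤ g t) (N : ℕ) (t : ℝ) :
    layerSum s c U A N t ≤ b + layerSum s c U (A \ D) N t := by
  set F := (Ici 0).indicator (layerCoveringNumber s c U A)
  set H := (Ici 0).indicator (layerCoveringNumber s c U (A \ D))
  have hH : 0 ≤ H := indicator_nonneg fun _ _ => layerCoveringNumber_nonneg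
  have hFgH : F ≤ g + H := fun u => indicator_apply_le' (fun hu => by
    rcases le_or_gt u T with huT | huT
    · exact le_add_of_le_of_nonneg (hAg u hu huT) (hH u)
    · refine le_add_of_nonneg_of_le (hg u) ?_
      rw [show H u = layerCoveringNumber s c U (A \ D) u from indicator_of_mem hu _]
      exact layerCoveringNumber_le_diff hA hD (hδ u huT)) fun _ => add_nonneg (hg u) (hH u)
  calc layerSum s c U A N t ≤ backwardSum (g + H) N t := backwardSum_mono hFgH N t
    _ ≤ b + layerSum s c U (A \ D) N t := by
      rw [backwardSum_add]
      exact add_le_add_left (hgb N t) _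

end LayerSum

namespace MWGraph

variable {d : ℕ} {V E : Type} [Fintype V] [Fintype E] [DecidableEq V] {G : MWGraph d V E}
  {C K KC U : V → Set (Pt d)} {s c b T : ℝ} {g : ℝ → ℝ}

lemma IsInhomAttractor.layerSum_le (hKC : G.IsInhomAttractor C KC) (hU : G.IsOSCWith U)
    (hT : ∀ e, -Real.log (G.r e) ≤ T) (hg : 0 ≤ g) (hgb : ∀ N t, backwardSum g N t ≤ b)
    (hCg : ∀ i t, 0 ≤ t → scaledCoveringNumber s (C i) t ≤ g t) {i : V} {A : Set (Pt d)}
    (hAg : ∀ t, 0 ≤ t → t ≤ T → layerCoveringNumber s c (U i) A t ≤ g t) (hA : A ⊆ KC i)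
    (N : ℕ) (t : ℝ) :
    layerSum s c (U i) A N t ≤ b + ∑ e with G.init e = i, G.r e ^ s *
      layerSum s c (U (G.term e)) (KC (G.term e) ∩ G.S e ⁻¹' A) N (t + Real.log (G.r e)) := by
  set H : E → ℝ → ℝ := fun e => (Ici 0).indicator
    (layerCoveringNumber s c (U (G.term e)) (KC (G.term e) ∩ G.S e ⁻¹' A))
  have hH : ∀ u, 0 ≤ ∑ e with G.init e = i, G.r e ^ s * H e (u + Real.log (G.r e)) := fun u =>
    Finset.sum_nonneg fun e _ => mul_nonneg (Real.rpow_nonneg (G.r_pos e).le s)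
      (indicator_nonneg (fun _ _ => layerCoveringNumber_nonneg) _)
  refine (backwardSum_le_add_sum (g := g) (H := H) _ _ _ (fun u => ?_) N t).trans
    (add_le_add_left (hgb N t) _)
  refine indicator_apply_le' (fun hu => ?_) fun _ => add_nonneg (hg u) (hH u)
  rcases le_or_gt u T with huT | huT
  · exact le_add_of_le_of_nonneg (hAg u hu huT) (hH u)
  have hH' : ∀ e, H e (u + Real.log (G.r e)) = layerCoveringNumber s c (U (G.term e))
      (KC (G.term e) ∩ G.S e ⁻¹' A) (u + Real.log (G.r e)) := fun e =>
    indicator_of_mem (mem_Ici.2 (by linarith [hT e])) _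
  simp only [hH']
  exact (hKC.layerCoveringNumber_le hU hA).trans (add_le_add_left (hCg i u hu) _)

lemma IsInhomAttractor.isRenewalBound_layerSum [DecidableEq E] (hKC : G.IsInhomAttractor C KC)
    (hU : G.IsOSCWith U) (hT : ∀ e, -Real.log (G.r e) ≤ T) (hg : 0 ≤ g)
    (hgb : ∀ N t, backwardSum g N t ≤ b)
    (hCg : ∀ i t, 0 ≤ t → scaledCoveringNumber s (C i) t ≤ g t)
    (hAg : ∀ i, ∀ A ⊆ KC i, ∀ t, 0 ≤ t → t ≤ T → layerCoveringNumber s c (U i) A t ≤ g t)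
    (N : ℕ) :
    G.IsRenewalBound s b (fun i => layerSum s c (U i) (KC i) N)
      (fun i w => layerSum s c (U i) (KC i \ G.cell KC i w) N) where
  nil_le i t := by
    have hcell : G.cell KC i [] = KC i := image_id _
    rw [hcell, sdiff_self, layerSum_empty]
  cons_le e w t := by
    set A := KC (G.init e) \ G.cell KC (G.init e) (e :: w)
    have hfirst : KC (G.term e) ∩ G.S e ⁻¹' A ⊆ KC (G.term e) \ G.cell KC (G.term e) w :=
      fun x hx => ⟨hx.1, fun hxw => hx.2.2 (by rwa [← mem_preimage, preimage_S_cell_cons])⟩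
    refine (hKC.layerSum_le hU hT hg hgb hCg (hAg _ A sdiff_subset) sdiff_subset N t).trans ?_
    rw [← Finset.add_sum_erase _ _ (by simp : e ∈ _)]
    gcongr with a _
    · exact Real.rpow_nonneg (G.r_pos e).le s
    · exact layerSum_mono ((hKC.1 _).isBounded.subset sdiff_subset) hfirst N _
    · exact Real.rpow_nonneg (G.r_pos a).le s
    · exact layerSum_mono (hKC.1 _).isBounded inter_subset_left N _

lemma IsInhomAttractor.exists_layerSum_le (hKC : G.IsInhomAttractor C KC) (hK : G.IsAttractor K)
    (hU : G.IsOSCWith U) (hUK : ∀ i, (U i ∩ K i).Nonempty) (hs : 0 ≤ s)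
    (hint : ∀ i, ∫⁻ t in Ioi 0, ENNReal.ofReal (scaledCoveringNumber s (C i) t) < ⊤)
    {h : V → ℝ} (hpos : ∀ i, 0 < h i) (hh : G.IsSubinvariant s h) (c : ℝ) :
    ∃ R, ∀ i N t, layerSum s c (U i) (KC i) N t ≤ R * h i := by
  classical
  obtain ⟨τ, T₀, hτ0, -, hlog⟩ := G.exists_forall_mem_Icc_neg_log_r
  choose w hw δ hδ hdisj using fun i =>
    exists_disjoint_cell_thickening hK hKC.1 (hU.2.1 i) (hUK i)
  obtain ⟨T₁, hT₁⟩ : ∃ T₁, ∀ t ≥ T₁, ∀ i, c * Real.exp (-t) ≤ δ i := by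
    have hlim : Tendsto (fun t => c * Real.exp (-t)) atTop (𝓝 0) := by
      simpa using Real.tendsto_exp_neg_atTop_nhds_zero.const_mul c
    exact eventually_atTop.1 (eventually_all.2 fun i => hlim.eventually (ge_mem_nhds (hδ i)))
  obtain ⟨g, b, hg, hgb, hCg, hAg⟩ := exists_le_of_backwardSum_le hs hKC.isBounded_condensation
    (fun i => (hKC.1 i).isBounded) hint (max T₀ T₁)
  have hlayer : ∀ i, ∀ A ⊆ KC i, ∀ t, 0 ≤ t → t ≤ max T₀ T₁ →
      layerCoveringNumber s c (U i) A t ≤ g t := fun i A hA t =>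
    hAg i _ (inter_subset_left.trans hA) t
  obtain ⟨R, hR, hbR⟩ := exists_forall_mul_le (a := fun i => ((w i).length + 1) * b) fun i =>
    mul_pos (Real.rpow_pos_of_pos (G.pathRatio_pos (w i)) s) (hpos (G.pathTerm i (w i)))
  refine ⟨R, fun i N t => ?_⟩
  have hrenewal := hKC.isRenewalBound_layerSum hU (fun e => (hlog e).2.trans (le_max_left _ T₁)) hg
    hgb hCg hlayer N
  exact hrenewal.le_mul hh hs hτ0 (fun e => (hlog e).1) (hgb 0 0) hR
    (fun i t ht => (backwardSum_indicator_Ici_eq_zero ht N).le) hw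
    (fun i => layerSum_le_add_diff (hKC.1 i).isBounded (hdisj i)
      (fun t ht => hT₁ t ((le_max_right _ _).trans ht.le) i) hg hgb (hlayer i _ subset_rfl) N)
    hbR i t

end MWGraph

lemma summable_sSup_abs_of_le {F : ℝ → ℝ} {b : ℕ → ℝ} (hb : Summable b) {k₀ : ℕ}
    (hF : ∀ k ≥ k₀, ∀ t ∈ Icc (k : ℝ) (k + 1), |F t| ≤ b k) :
    Summable fun k : ℕ => sSup {x : ℝ | ∃ t ∈ Icc (k : ℝ) (k + 1), x = |F t|} := by
  refine (summable_nat_add_iff k₀).1 (((summable_nat_add_iff k₀).2 hb).of_nonneg_of_le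
    (fun k => Real.sSup_nonneg ?_) fun k => csSup_le ?_ ?_)
  · rintro _ ⟨t, -, rfl⟩
    exact abs_nonneg _
  · exact ⟨_, _, left_mem_Icc.2 (by linarith), rfl⟩
  · rintro _ ⟨t, ht, rfl⟩
    exact hF _ (Nat.le_add_left _ _) t ht

namespace MWGraph

variable {d : ℕ} {V E : Type} [Fintype V] [Fintype E] [DecidableEq V] (G : MWGraph d V E)
  {C K KC U : V → Set (Pt d)} {s : ℝ}

/-- The defect of the renewal equation for the rescaled covering numbers cut off at negative times.
It is the function `L_i`, written so that the renewal equation is its definition. -/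
def renewalError (KC : V → Set (Pt d)) (s : ℝ) (i : V) (t : ℝ) : ℝ :=
  (Ici 0).indicator (scaledCoveringNumber s (KC i)) t - ∑ e with G.init e = i,
    G.r e ^ s * (Ici 0).indicator (scaledCoveringNumber s (KC (G.term e))) (t + Real.log (G.r e))

lemma renewalError_of_neg {i : V} {t : ℝ} (ht : t < 0) : G.renewalError KC s i t = 0 := by
  have hneg : ∀ e, t + Real.log (G.r e) ∉ Ici 0 := fun e => by
    rw [mem_Ici, not_le]
    linarith [Real.log_neg (G.r_pos e) (G.r_lt_one e)]
  have ht' : t ∉ Ici 0 := by rwa [mem_Ici, not_le]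
  simp only [renewalError, indicator_of_notMem ht', indicator_of_notMem (hneg _), mul_zero,
    Finset.sum_const_zero, sub_zero]

lemma renewalError_of_nonneg {i : V} {t : ℝ} (ht : 0 ≤ t) :
    G.renewalError KC s i t = scaledCoveringNumber s (KC i) t -
      ∑ e with G.init e = i, scaledCoveringNumber s (G.S e '' KC (G.term e)) t +
      ∑ e with G.init e = i ∧ t < Real.log (1 / G.r e),
        G.r e ^ s * scaledCoveringNumber s (KC (G.term e)) (t + Real.log (G.r e)) := by
  have hsplit : ∀ e, scaledCoveringNumber s (G.S e '' KC (G.term e)) t = G.r e ^ s *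
        (Ici 0).indicator (scaledCoveringNumber s (KC (G.term e))) (t + Real.log (G.r e)) +
      if t < Real.log (1 / G.r e) then
        G.r e ^ s * scaledCoveringNumber s (KC (G.term e)) (t + Real.log (G.r e)) else 0 :=
    fun e => by
      rw [scaledCoveringNumber_image_of_dist_eq_mul_dist (G.r_pos e) (G.S_sim e), one_div,
        Real.log_inv]
      by_cases hlt : t < -Real.log (G.r e)
      · rw [if_pos hlt, indicator_of_notMem (by rw [mem_Ici]; linarith), mul_zero, zero_add]
      · rw [if_neg hlt, indicator_of_mem (by rw [mem_Ici]; linarith), add_zero]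
  rw [renewalError, indicator_of_mem (mem_Ici.2 ht), ← Finset.filter_filter,
    Finset.sum_filter (s := Finset.filter _ _)]
  simp only [hsplit, Finset.sum_add_distrib]
  ring

lemma intervalIntegrable_renewalError (hKC : ∀ i, Bornology.IsBounded (KC i)) (i : V) (a b : ℝ) :
    IntervalIntegrable (G.renewalError KC s i) volume a b := by
  refine (intervalIntegrable_indicator_scaledCoveringNumber (hKC i) a b).sub ?_
  simp only [← Finset.sum_fn]
  refine IntervalIntegrable.sum _ fun e _ => IntervalIntegrable.const_mul ?_ _
  simpa using (intervalIntegrable_indicator_scaledCoveringNumber (s := s) (hKC (G.term e))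
    (a + Real.log (G.r e)) (b + Real.log (G.r e))).comp_add_right (Real.log (G.r e))

variable {G}

lemma IsInhomAttractor.abs_renewalError_le (hKC : G.IsInhomAttractor C KC)
    (hU : G.IsOSCWith U) (hKU : ∀ i, KC i ⊆ closure (U i)) (hs : 0 ≤ s) {i : V} {k t : ℝ}
    (hk0 : 0 ≤ k) (hk : ∀ e, -Real.log (G.r e) ≤ k) (ht : t ∈ Icc k (k + 1)) :
    |G.renewalError KC s i t| ≤ (Fintype.card E + 1) * (Real.exp s *
      ((Ici 0).indicator (scaledCoveringNumber s (C i)) (k + 1) + ∑ e with G.init e = i, G.r e ^ s *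
        (Ici 0).indicator (layerCoveringNumber s (3 * Real.exp 1) (U (G.term e)) (KC (G.term e)))
          (k + (1 + Real.log (G.r e))))) := by
  have hkt : ∀ e, t + Real.log (G.r e) ∈ Ici 0 := fun e => mem_Ici.2 (by linarith [hk e, ht.1])
  have hk1 : ∀ e, k + (1 + Real.log (G.r e)) ∈ Ici 0 := fun e => mem_Ici.2 (by linarith [hk e])
  simp only [renewalError, indicator_of_mem (mem_Ici.2 (hk0.trans ht.1)),
    indicator_of_mem (mem_Ici.2 (hk0.trans (le_add_of_nonneg_right zero_le_one))),
    indicator_of_mem (hkt _), indicator_of_mem (hk1 _)]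
  refine (hKC.abs_scaledCoveringNumber_sub_sum_le hU hKU i).trans ?_
  rw [mul_add (Real.exp s), Finset.mul_sum]
  simp only [mul_left_comm (Real.exp s)]
  gcongr with e _
  · exact scaledCoveringNumber_le_exp_mul hs (hKC.isBounded_condensation i) ht.2
      (by linarith [ht.1])
  · exact Real.rpow_nonneg (G.r_pos e).le s
  · exact layerCoveringNumber_le_exp_mul hs (by norm_num) (hKC.1 _).isBounded (by linarith [ht.2])
      (by linarith [ht.1])

lemma IsInhomAttractor.summable_layerCoveringNumber (hKC : G.IsInhomAttractor C KC)
    (hK : G.IsAttractor K) (hU : G.IsOSCWith U) (hUK : ∀ i, (U i ∩ K i).Nonempty)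
    (hSC : G.StronglyConnected) (hs : 0 ≤ s) (hρ : matrixSpectralRadius (G.Amatrix s) ≤ 1)
    (hint : ∀ i, ∫⁻ t in Ioi 0, ENNReal.ofReal (scaledCoveringNumber s (C i) t) < ⊤)
    (c : ℝ) (i : V) (a : ℝ) :
    Summable fun k : ℕ => (Ici 0).indicator (layerCoveringNumber s c (U i) (KC i)) (k + a) := by
  obtain ⟨h, hpos, hh⟩ := G.exists_pos_isSubinvariant hSC hρ
  obtain ⟨R, hR⟩ := hKC.exists_layerSum_le hK hU hUK hs hint hpos hh c
  exact summable_natCast_add_of_backwardSum_le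
    (indicator_nonneg fun _ _ => layerCoveringNumber_nonneg) (hR i) a

lemma IsInhomAttractor.summable_sSup_abs_renewalError (hKC : G.IsInhomAttractor C KC)
    (hK : G.IsAttractor K) (hU : G.IsOSCWith U) (hUK : ∀ i, (U i ∩ K i).Nonempty)
    (hCU : ∀ i, C i ⊆ closure (U i)) (hSC : G.StronglyConnected) (hs : 0 ≤ s)
    (hρ : matrixSpectralRadius (G.Amatrix s) ≤ 1)
    (hint : ∀ i, ∫⁻ t in Ioi 0, ENNReal.ofReal (scaledCoveringNumber s (C i) t) < ⊤) (i : V) :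
    Summable fun k : ℕ =>
      sSup {x : ℝ | ∃ t ∈ Icc (k : ℝ) (k + 1), x = |G.renewalError KC s i t|} := by
  have hKU := hKC.subset_closure_of_mapsTo hU.1 hU.mapsTo_S hCU
  have hlayer := hKC.summable_layerCoveringNumber hK hU hUK hSC hs hρ hint (3 * Real.exp 1)
  have hC : Summable fun k : ℕ => (Ici 0).indicator (scaledCoveringNumber s (C i)) (k + 1) :=
    summable_natCast_add_of_backwardSum_le (indicator_nonneg fun _ _ => scaledCoveringNumber_nonneg)
      (backwardSum_indicator_scaledCoveringNumber_le hs (hKC.isBounded_condensation i) (hint i)) 1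
  obtain ⟨_, T, -, -, hT⟩ := G.exists_forall_mem_Icc_neg_log_r
  obtain ⟨k₀, hk₀⟩ := exists_nat_ge T
  have hbound := ((hC.add (summable_sum (s := {e | G.init e = i}) fun e _ =>
    (hlayer (G.term e) (1 + Real.log (G.r e))).mul_left (G.r e ^ s))).mul_left
      (Real.exp s)).mul_left (Fintype.card E + 1 : ℝ)
  exact summable_sSup_abs_of_le hbound fun k hk t ht => hKC.abs_renewalError_le hU hKU hs
    k.cast_nonneg (fun e => (hT e).2.trans (hk₀.trans (Nat.cast_le.2 hk))) ht

end MWGraph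

theorem stmt9_general {d : ℕ} {V E : Type} [Fintype V] [Fintype E] [DecidableEq V]
    (G : MWGraph d V E) (hSC : G.StronglyConnected)
    (C K KC U : V → Set (Pt d))
    (hK : G.IsAttractor K) (hKC : G.IsInhomAttractor C KC)
    (hU : G.IsOSCWith U) (hUK : ∀ i, (U i ∩ K i).Nonempty)
    (hCU : ∀ i, C i ⊆ closure (U i))
    (s0 : ℝ) (hs : 0 ≤ s0) (hρ : matrixSpectralRadius (G.Amatrix s0) ≤ 1)
    (hint : ∀ i : V, ∫⁻ t in Set.Ioi (0 : ℝ),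
      ENNReal.ofReal (Real.exp (-s0 * t) * (coveringNumber (C i) (Real.exp (-t)) : ℝ)) < ⊤)
    (fstar : V → ℝ → ℝ)
    (hfstar : ∀ (j : V) (t : ℝ), fstar j t =
      Real.exp (-s0 * t) * (coveringNumber (KC j) (Real.exp (-t)) : ℝ))
    (Lstar : V → ℝ → ℝ)
    (hLstar : ∀ (i : V) (t : ℝ), Lstar i t =
      (∑ e : E, if G.init e = i then
        ((coveringNumber (G.S e '' KC (G.term e)) (Real.exp (-t)) : ℝ)) else 0)
      - (coveringNumber (KC i) (Real.exp (-t)) : ℝ))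
    (f L : V → ℝ → ℝ)
    (hf : ∀ (i : V) (t : ℝ), f i t = if 0 ≤ t then fstar i t else 0)
    (hL : ∀ (i : V) (t : ℝ), L i t = if 0 ≤ t then
        (-(Lstar i t) * Real.exp (-s0 * t) +
          ∑ e : E, if G.init e = i ∧ t < Real.log (1 / G.r e) then
            G.r e ^ s0 * fstar (G.term e) (t + Real.log (G.r e)) else 0)
      else 0) :
    (∀ (i : V) (t : ℝ), f i t =
      (∑ e : E, if G.init e = i then
        G.r e ^ s0 * f (G.term e) (t + Real.log (G.r e)) else 0) + L i t) ∧
    (∀ i : V, (∀ a b : ℝ, IntervalIntegrable (L i) MeasureTheory.volume a b) ∧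
      Summable (fun k : ℕ => sSup {x : ℝ | ∃ t ∈ Set.Icc (k : ℝ) (k + 1), x = |L i t|})) := by
  have hf' : ∀ j, f j = (Ici 0).indicator (scaledCoveringNumber s0 (KC j)) := fun j =>
    funext fun t => by simp only [hf, hfstar, indicator_apply, mem_Ici, scaledCoveringNumber]
  have hL' : ∀ i, L i = G.renewalError KC s0 i := fun i => funext fun t => by
    rcases lt_or_ge t 0 with ht | ht
    · rw [hL, if_neg ht.not_ge, G.renewalError_of_neg ht]
    · rw [hL, if_pos ht, G.renewalError_of_nonneg ht, hLstar, Finset.sum_filter, Finset.sum_filter]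
      simp only [hfstar, scaledCoveringNumber, neg_sub, sub_mul, mul_comm (Real.exp _),
        Finset.sum_mul, ite_mul, zero_mul]
  refine ⟨fun i t => ?_, fun i => ⟨?_, ?_⟩⟩
  · simp only [hf', hL', MWGraph.renewalError, ← Finset.sum_filter, add_sub_cancel]
  · rw [hL']
    exact G.intervalIntegrable_renewalError (fun j => (hKC.1 j).isBounded) i
  · rw [hL']
    exact hKC.summable_sSup_abs_renewalError hK hU hUK hCU hSC hs hρ hint i

theorem stmt9 {d : ℕ} {V E : Type} [Fintype V] [Fintype E] [DecidableEq V]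
    (G : MWGraph d V E) (hSC : G.StronglyConnected)
    (C K KC U : V → Set (Pt d))
    (hC : G.IsCondensation C) (hK : G.IsAttractor K) (hKC : G.IsInhomAttractor C KC)
    (hU : G.IsOSCWith U) (hUK : ∀ i, (U i ∩ K i).Nonempty)
    (hCU : ∀ i, C i ⊆ closure (U i))
    (s0 : ℝ) (hs0 : IsS0 G s0)
    (hint : ∀ i : V, ∫⁻ t in Set.Ioi (0 : ℝ),
      ENNReal.ofReal (Real.exp (-s0 * t) * (coveringNumber (C i) (Real.exp (-t)) : ℝ)) < ⊤)
    (fstar : V → ℝ → ℝ)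
    (hfstar : ∀ (j : V) (t : ℝ), fstar j t =
      Real.exp (-s0 * t) * (coveringNumber (KC j) (Real.exp (-t)) : ℝ))
    (Lstar : V → ℝ → ℝ)
    (hLstar : ∀ (i : V) (t : ℝ), Lstar i t =
      (∑ e : E, if G.init e = i then
        ((coveringNumber (G.S e '' KC (G.term e)) (Real.exp (-t)) : ℝ)) else 0)
      - (coveringNumber (KC i) (Real.exp (-t)) : ℝ))
    (f L : V → ℝ → ℝ)
    (hf : ∀ (i : V) (t : ℝ), f i t = if 0 ≤ t then fstar i t else 0)
    (hL : ∀ (i : V) (t : ℝ), L i t = if 0 ≤ t then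
        (-(Lstar i t) * Real.exp (-s0 * t) +
          ∑ e : E, if G.init e = i ∧ t < Real.log (1 / G.r e) then
            G.r e ^ s0 * fstar (G.term e) (t + Real.log (G.r e)) else 0)
      else 0) :
    (∀ (i : V) (t : ℝ), f i t =
      (∑ e : E, if G.init e = i then
        G.r e ^ s0 * f (G.term e) (t + Real.log (G.r e)) else 0) + L i t) ∧
    (∀ i : V, (∀ a b : ℝ, IntervalIntegrable (L i) MeasureTheory.volume a b) ∧
      Summable (fun k : ℕ => sSup {x : ℝ | ∃ t ∈ Set.Icc (k : ℝ) (k + 1), x = |L i t|})) :=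
  stmt9_general G hSC C K KC U hK hKC hU hUK hCU s0 hs0.1 hs0.2.le hint fstar hfstar Lstar hLstar
    f L hf hL
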